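/- arXiv:1710.09773 — 6 statements merged into one kernel-verified Lean document; each statement's English description precedes it below -/
import Mathlib

section
/- Let q ≥ 1 be a natural number, let g, h ∈ ℂ[Y] be polynomials with g ≠ 0 and g(Y) = h(Y^q) (that is, g = h.comp (Y^q)), and let y₀ ∈ ℂ with y₀ ≠ 0. If k is the root multiplicity of y₀ in g, then (Y^q − y₀^q)^k divides g in ℂ[Y]. -/
open Polynomial

/-!
Let `a = f(r)` and factor `f - a = (X - r) * e`, so that `e(r) = f'(r)`. If `(X - r) ^ (n + 1)`
divides `p ∘ f`, then `p(a) = 0`, so `p = (X - a) * u` and `p ∘ f = (X - r) * (e * (u ∘ f))`. When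
`f'(r)` is not a zero divisor, `e` can be cancelled modulo powers of `X - r`, hence `(X - r) ^ n`
divides `u ∘ f`. By induction `(X - a) ^ (n + 1)` divides `p`, and composing with `f` shows that
`(f - a) ^ (n + 1)` divides `p ∘ f`. The case `f = X ^ q` has `f'(r) = q * r ^ (q - 1)`.
-/

section

variable {R : Type*} [CommRing R] {r : R}

theorem X_sub_C_pow_succ_dvd_X_sub_C_mul_iff {n : ℕ} {p : R[X]} :
    (X - C r) ^ (n + 1) ∣ (X - C r) * p ↔ (X - C r) ^ n ∣ p := by
  rw [pow_succ', (monic_X_sub_C r).isRegular.left.dvd_cancel_left]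

theorem X_sub_C_pow_dvd_of_dvd_mul_left {e p : R[X]} {n : ℕ}
    (he : e.eval r ∈ nonZeroDivisors R) (h : (X - C r) ^ n ∣ e * p) :
    (X - C r) ^ n ∣ p := by
  induction n generalizing p with
  | zero => simp
  | succ n ih =>
    have hroot : p.IsRoot r := by
      have hmul : (e * p).IsRoot r := dvd_iff_isRoot.mp ((dvd_pow_self _ n.succ_ne_zero).trans h)
      rwa [IsRoot, eval_mul, mul_left_mem_nonZeroDivisors_eq_zero_iff he] at hmul
    obtain ⟨u, rfl⟩ := dvd_iff_isRoot.mpr hroot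
    rw [mul_left_comm, X_sub_C_pow_succ_dvd_X_sub_C_mul_iff] at h
    exact X_sub_C_pow_succ_dvd_X_sub_C_mul_iff.mpr (ih h)

theorem exists_sub_C_eval_eq_X_sub_C_mul (f : R[X]) (r : R) :
    ∃ e : R[X], f - C (f.eval r) = (X - C r) * e ∧ e.eval r = f.derivative.eval r := by
  obtain ⟨e, he⟩ := X_sub_C_dvd_sub_C_eval (p := f) (a := r)
  refine ⟨e, he, ?_⟩
  simpa using (congrArg (fun p => p.derivative.eval r) he).symm

theorem X_sub_C_pow_dvd_of_dvd_comp {f p : R[X]} {n : ℕ}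
    (hf : f.derivative.eval r ∈ nonZeroDivisors R) (h : (X - C r) ^ n ∣ p.comp f) :
    (X - C (f.eval r)) ^ n ∣ p := by
  obtain ⟨e, hfe, her⟩ := exists_sub_C_eval_eq_X_sub_C_mul f r
  induction n generalizing p with
  | zero => simp
  | succ n ih =>
    have hroot : p.IsRoot (f.eval r) := by
      rw [← isRoot_comp]
      exact dvd_iff_isRoot.mp ((dvd_pow_self _ n.succ_ne_zero).trans h)
    obtain ⟨u, rfl⟩ := dvd_iff_isRoot.mpr hroot
    have hcomp : ((X - C (f.eval r)) * u).comp f = (X - C r) * (e * u.comp f) := by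
      rw [mul_comp, sub_comp, X_comp, C_comp, hfe, mul_assoc]
    rw [hcomp, X_sub_C_pow_succ_dvd_X_sub_C_mul_iff] at h
    exact X_sub_C_pow_succ_dvd_X_sub_C_mul_iff.mpr
      (ih (X_sub_C_pow_dvd_of_dvd_mul_left (her ▸ hf) h))

theorem pow_sub_pow_dvd_of_comp_general {f : R[X]} (p : R[X])
    (hf : f.derivative.eval r ∈ nonZeroDivisors R) :
    (f - C (f.eval r)) ^ (p.comp f).rootMultiplicity r ∣ p.comp f := by
  obtain ⟨u, hu⟩ := X_sub_C_pow_dvd_of_dvd_comp hf (pow_rootMultiplicity_dvd (p.comp f) r)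
  refine ⟨u.comp f, ?_⟩
  simpa only [mul_comp, pow_comp, sub_comp, X_comp, C_comp] using congrArg (·.comp f) hu

end

/-- If `g ≠ 0`, `g(Y) = h(Y^q)` with `q ≥ 1`, `y₀ ≠ 0` and `k` is the root
multiplicity of `y₀` in `g`, then `(Y^q − y₀^q)^k` divides `g` in `ℂ[Y]`. -/
theorem pow_sub_pow_dvd_of_comp (q : ℕ) (hq : 1 ≤ q)
    (g h : Polynomial ℂ) (hg0 : g ≠ 0) (hg : g = h.comp (X ^ q))
    (y₀ : ℂ) (hy₀ : y₀ ≠ 0) :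
    (X ^ q - C (y₀ ^ q)) ^ (g.rootMultiplicity y₀) ∣ g := by
  have hderiv : (X ^ q : ℂ[X]).derivative.eval y₀ ∈ nonZeroDivisors ℂ := by
    simp [derivative_X_pow, hy₀, Nat.one_le_iff_ne_zero.mp hq]
  simpa [hg] using pow_sub_pow_dvd_of_comp_general h hderiv
end

section
/- Let a < b be real numbers, n ∈ ℕ, and c : Fin (n+1) → ℝ with c 0 ≠ 0. Let x : ℝ → ℝ be integrable on (a,b) and f : ℝ → ℝ be infinitely differentiable on (a,b) (ContDiffOn ℝ ⊤ f (Set.Ioo a b)). If for almost every t ∈ (a,b) one has Σ_{j=0}^{n} c_j · (I_a^[n−j] x)(t) = f(t), then there exists y : ℝ → ℝ infinitely differentiable on (a,b) such that x = y almost everywhere on (a,b). -/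
/-!
Let `k` be the order of the lowest iterated integral occurring in the equation with a nonzero
coefficient. Then `u = I_a^[k] x` solves an equation of the second kind, expressing it a.e. through
`f` and its own iterated integrals. The right-hand side `v` of that equation is continuous, and
integrals do not distinguish `u` from `v`; hence if `v` is `C^p`, the iterated integrals of `u`, and
with them `v`, are `C^(p+1)`. So `u` is a.e. equal to the smooth function `v`. By Lebesgue's
differentiation theorem a function is a.e. the derivative of its indefinite integral, so smoothness
descends from `I_a^[k] x` to `x` one integration at a time.
-/

open MeasureTheory

/-- The indefinite-integral operator `(I_a g)(t) = ∫_a^t g(s) ds`. -/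
noncomputable def indefInt (a : ℝ) (g : ℝ → ℝ) : ℝ → ℝ := fun t => ∫ s in a..t, g s

section VectorValued

open Set
open scoped ContDiff Interval Topology

variable {E : Type*} [NormedAddCommGroup E] [NormedSpace ℝ E] {a b t₀ t : ℝ} {f g x y : ℝ → E}

/-- The indefinite integral of a vector-valued function with base point `t₀`; `indefInt` is the case
`E = ℝ`. -/
noncomputable def primitiveFrom (t₀ : ℝ) (g : ℝ → E) : ℝ → E := fun t => ∫ s in t₀..t, g s

/-- Smoothness of an a.e. equivalence class: `g` agrees almost everywhere on `s` with a function
that is smooth on `s`. -/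
def AESmoothOn (g : ℝ → E) (s : Set ℝ) : Prop :=
  ∃ y : ℝ → E, ContDiffOn ℝ ∞ y s ∧ g =ᵐ[volume.restrict s] y

theorem continuousOn_primitiveFrom (hg : IntervalIntegrable g volume a b) (ht₀ : t₀ ∈ [[a, b]]) :
    ContinuousOn (primitiveFrom t₀ g) [[a, b]] :=
  intervalIntegral.continuousOn_primitive_interval' hg ht₀

theorem continuousOn_primitiveFrom_Ioo (hg : IntervalIntegrable g volume a b)
    (ht₀ : t₀ ∈ [[a, b]]) : ContinuousOn (primitiveFrom t₀ g) (Ioo a b) :=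
  (continuousOn_primitiveFrom hg ht₀).mono (Ioo_subset_Icc_self.trans Icc_subset_uIcc)

theorem intervalIntegrable_primitiveFrom (hg : IntervalIntegrable g volume a b)
    (ht₀ : t₀ ∈ [[a, b]]) : IntervalIntegrable (primitiveFrom t₀ g) volume a b :=
  (continuousOn_primitiveFrom hg ht₀).intervalIntegrable

theorem intervalIntegrable_iterate_primitiveFrom (hg : IntervalIntegrable g volume a b)
    (ht₀ : t₀ ∈ [[a, b]]) (k : ℕ) : IntervalIntegrable ((primitiveFrom t₀)^[k] g) volume a b :=
  Function.Iterate.rec (IntervalIntegrable · volume a b) hg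
    (fun _ hh => intervalIntegrable_primitiveFrom hh ht₀) k

variable [CompleteSpace E]

theorem hasDerivAt_primitiveFrom_of_ae_eq (hg : IntervalIntegrable g volume a b)
    (ht₀ : t₀ ∈ [[a, b]]) (hy : ContinuousOn y (Ioo a b))
    (hgy : g =ᵐ[volume.restrict (Ioo a b)] y) (ht : t ∈ Ioo a b) :
    HasDerivAt (primitiveFrom t₀ g) (y t) t := by
  have hnhds : Ioo a b ∈ 𝓝 t := isOpen_Ioo.mem_nhds ht
  have hint : IntervalIntegrable g volume t₀ t :=
    hg.mono_set (uIcc_subset_uIcc ht₀ (Icc_subset_uIcc (Ioo_subset_Icc_self ht)))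
  have hmeas : StronglyMeasurableAtFilter g (𝓝 t) :=
    ⟨Ioo a b, hnhds, (hy.aestronglyMeasurable measurableSet_Ioo).congr hgy.symm⟩
  have hyg : y =ᶠ[𝓝 t ⊓ ae volume] g := by
    filter_upwards [Filter.mem_inf_of_left hnhds,
      Filter.mem_inf_of_right (ae_imp_of_ae_restrict hgy)] with s hs hgs
    exact (hgs hs).symm
  have hlim : Filter.Tendsto g (𝓝 t ⊓ ae volume) (𝓝 (y t)) :=
    ((hy.continuousAt hnhds).mono_left inf_le_left).congr' hyg
  exact intervalIntegral.integral_hasDerivAt_of_tendsto_ae_right hint hmeas hlim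

theorem contDiffOn_primitiveFrom_of_ae_eq {p : ℕ∞} (hg : IntervalIntegrable g volume a b)
    (ht₀ : t₀ ∈ [[a, b]]) (hy : ContDiffOn ℝ p y (Ioo a b))
    (hgy : g =ᵐ[volume.restrict (Ioo a b)] y) :
    ContDiffOn ℝ (p + 1) (primitiveFrom t₀ g) (Ioo a b) := by
  have hderiv : ∀ t ∈ Ioo a b, HasDerivAt (primitiveFrom t₀ g) (y t) t := fun t =>
    hasDerivAt_primitiveFrom_of_ae_eq hg ht₀ hy.continuousOn hgy
  rw [contDiffOn_succ_iff_deriv_of_isOpen isOpen_Ioo]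
  exact ⟨fun t ht => (hderiv t ht).differentiableAt.differentiableWithinAt,
    fun hp => absurd hp (by simp), hy.congr fun t ht => (hderiv t ht).deriv⟩

theorem contDiffOn_iterate_succ_primitiveFrom_of_ae_eq {p : ℕ∞}
    (hg : IntervalIntegrable g volume a b) (ht₀ : t₀ ∈ [[a, b]])
    (hy : ContDiffOn ℝ p y (Ioo a b)) (hgy : g =ᵐ[volume.restrict (Ioo a b)] y) (k : ℕ) :
    ContDiffOn ℝ (p + 1) ((primitiveFrom t₀)^[k + 1] g) (Ioo a b) := by
  induction k with
  | zero => exact contDiffOn_primitiveFrom_of_ae_eq hg ht₀ hy hgy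
  | succ k ih =>
    rw [Function.iterate_succ_apply']
    exact contDiffOn_primitiveFrom_of_ae_eq
      (intervalIntegrable_iterate_primitiveFrom hg ht₀ (k + 1)) ht₀ (ih.of_le le_self_add) .rfl

theorem ae_eq_deriv_primitiveFrom (hg : IntervalIntegrable g volume a b) (ht₀ : t₀ ∈ [[a, b]]) :
    g =ᵐ[volume.restrict (Ioo a b)] deriv (primitiveFrom t₀ g) := by
  filter_upwards [ae_restrict_of_ae hg.ae_hasDerivAt_integral, ae_restrict_mem measurableSet_Ioo]
    with t hderiv ht
  exact (hderiv (Icc_subset_uIcc (Ioo_subset_Icc_self ht)) t₀ ht₀).deriv.symm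

theorem AESmoothOn.of_primitiveFrom (hg : IntervalIntegrable g volume a b) (ht₀ : t₀ ∈ [[a, b]])
    (h : AESmoothOn (primitiveFrom t₀ g) (Ioo a b)) : AESmoothOn g (Ioo a b) := by
  obtain ⟨y, hy, hgy⟩ := h
  have heq : EqOn (primitiveFrom t₀ g) y (Ioo a b) :=
    Measure.eqOn_Ioo_of_ae_eq volume hgy (continuousOn_primitiveFrom_Ioo hg ht₀) hy.continuousOn
  have hsmooth : ContDiffOn ℝ ∞ (primitiveFrom t₀ g) (Ioo a b) := hy.congr heq
  exact ⟨_, ((contDiffOn_infty_iff_deriv_of_isOpen isOpen_Ioo).1 hsmooth).2,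
    ae_eq_deriv_primitiveFrom hg ht₀⟩

theorem aeSmoothOn_of_ae_eq_sub_sum_iterate {R : Type*} [DistribSMul R E] [SMulCommClass ℝ R E]
    [ContinuousConstSMul R E] {n : ℕ} (d : Fin n → R) (hx : IntervalIntegrable x volume a b)
    (ht₀ : t₀ ∈ [[a, b]]) (hf : ContDiffOn ℝ ∞ f (Ioo a b))
    (heq : x =ᵐ[volume.restrict (Ioo a b)]
      fun t => f t - ∑ k : Fin n, d k • (primitiveFrom t₀)^[k + 1] x t) :
    AESmoothOn x (Ioo a b) := by
  refine ⟨_, contDiffOn_infty.2 fun p => ?_, heq⟩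
  induction p with
  | zero =>
    refine contDiffOn_zero.2 (hf.continuousOn.sub (continuousOn_finsetSum _ fun k _ => ?_))
    rw [Function.iterate_succ']
    exact (continuousOn_primitiveFrom_Ioo
      (intervalIntegrable_iterate_primitiveFrom hx ht₀ k) ht₀).const_smul (d k)
  | succ p ih =>
    exact (hf.of_le (mod_cast le_top)).sub (ContDiffOn.sum fun k _ =>
      (contDiffOn_iterate_succ_primitiveFrom_of_ae_eq (p := p) hx ht₀ ih heq k).const_smul (d k))

variable {𝕜 : Type*} [DivisionRing 𝕜] [Module 𝕜 E] [SMulCommClass ℝ 𝕜 E] [ContinuousConstSMul 𝕜 E]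

theorem aeSmoothOn_of_sum_iterate_of_apply_zero_ne_zero {n : ℕ} {d : Fin (n + 1) → 𝕜} (hd : d 0 ≠ 0)
    (hx : IntervalIntegrable x volume a b) (ht₀ : t₀ ∈ [[a, b]])
    (hf : ContDiffOn ℝ ∞ f (Ioo a b))
    (heq : ∀ᵐ t ∂volume.restrict (Ioo a b), ∑ k, d k • (primitiveFrom t₀)^[k] x t = f t) :
    AESmoothOn x (Ioo a b) := by
  refine aeSmoothOn_of_ae_eq_sub_sum_iterate (fun k : Fin n => (d 0)⁻¹ * d k.succ) hx ht₀
    (hf.const_smul (d 0)⁻¹) ?_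
  filter_upwards [heq] with t ht
  simp [← ht, Fin.sum_univ_succ, Finset.smul_sum, smul_smul, hd]

theorem aeSmoothOn_of_sum_iterate {n : ℕ} {d : Fin n → 𝕜} (hd : d ≠ 0)
    (hx : IntervalIntegrable x volume a b) (ht₀ : t₀ ∈ [[a, b]])
    (hf : ContDiffOn ℝ ∞ f (Ioo a b))
    (heq : ∀ᵐ t ∂volume.restrict (Ioo a b), ∑ k, d k • (primitiveFrom t₀)^[k] x t = f t) :
    AESmoothOn x (Ioo a b) := by
  induction n generalizing x with
  | zero => exact absurd (Subsingleton.elim d 0) hd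
  | succ n ih =>
    by_cases hd₀ : d 0 = 0
    · have htail : Fin.tail d ≠ 0 := fun h => hd (funext (Fin.cases hd₀ (congrFun h)))
      refine .of_primitiveFrom hx ht₀ (ih htail (intervalIntegrable_primitiveFrom hx ht₀) ?_)
      simpa [Fin.sum_univ_succ, Fin.tail, hd₀] using heq
    · exact aeSmoothOn_of_sum_iterate_of_apply_zero_ne_zero hd₀ hx ht₀ hf heq

theorem smooth_solutions_of_integral_equation_general {n : ℕ} {c : Fin (n + 1) → 𝕜} (hc : c ≠ 0)
    (hx : IntervalIntegrable x volume a b) (ht₀ : t₀ ∈ [[a, b]])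
    (hf : ContDiffOn ℝ ∞ f (Ioo a b))
    (heq : ∀ᵐ t ∂volume.restrict (Ioo a b),
      ∑ j : Fin (n + 1), c j • (primitiveFrom t₀)^[n - (j : ℕ)] x t = f t) :
    AESmoothOn x (Ioo a b) := by
  have hrev : c ∘ Fin.rev ≠ 0 := fun h => hc (Fin.rev_surjective.injective_comp_right h)
  refine aeSmoothOn_of_sum_iterate hrev hx ht₀ hf ?_
  filter_upwards [heq] with t ht
  rw [← ht, ← Equiv.sum_comp Fin.revPerm]
  simp [Fin.val_rev]

end VectorValued

/-- If `x` is integrable on `(a,b)`, `f` is infinitely differentiable on `(a,b)`,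
`c 0 ≠ 0`, and `Σ_{j=0}^{n} c_j · (I_a^[n−j] x)(t) = f(t)` a.e. on `(a,b)`, then `x` agrees
a.e. on `(a,b)` with a function infinitely differentiable on `(a,b)`. -/
theorem smooth_solutions_of_integral_equation
    (a b : ℝ) (hab : a < b) (n : ℕ) (c : Fin (n + 1) → ℝ) (hc : c 0 ≠ 0)
    (x f : ℝ → ℝ) (hx : IntegrableOn x (Set.Ioo a b))
    (hf : ContDiffOn ℝ (⊤ : ℕ∞) f (Set.Ioo a b))
    (heq : ∀ᵐ t ∂(volume.restrict (Set.Ioo a b)),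
      ∑ j : Fin (n + 1), c j * (indefInt a)^[n - (j : ℕ)] x t = f t) :
    ∃ y : ℝ → ℝ, ContDiffOn ℝ (⊤ : ℕ∞) y (Set.Ioo a b) ∧
      ∀ᵐ t ∂(volume.restrict (Set.Ioo a b)), x t = y t :=
  smooth_solutions_of_integral_equation_general (Function.ne_iff.2 ⟨0, hc⟩)
    ((intervalIntegrable_iff_integrableOn_Ioo_of_le hab.le).2 hx) Set.left_mem_uIcc hf heq
end

section
/- Let a < b be real numbers, n ∈ ℕ, and c : Fin (n+1) → ℝ with c 0 ≠ 0. Let x : ℝ → ℝ be integrable on (a,b) and f : ℝ → ℝ be real analytic on a neighbourhood of each point of (a,b) (AnalyticOnNhd ℝ f (Set.Ioo a b)). If for almost every t ∈ (a,b) one has Σ_{j=0}^{n} c_j · (I_a^[n−j] x)(t) = f(t), then there exists y : ℝ → ℝ real analytic on a neighbourhood of each point of (a,b) such that x = y almost everywhere on (a,b). -/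
/-!
Let `p_k` be the lowest nonzero coefficient of the polynomial in `I_a`. If `k > 0`, the left-hand
side is `I_a` of an expression of the same kind, so by Lebesgue's differentiation theorem that
expression equals `f'` a.e.; after `k` such steps the equation can be solved for the term
`I_a^[0] x = x`. What remains is a Volterra equation `x = ∑ i, q_i I_a^[i+1] x + g` with `g`
analytic. The vector `X = (x, I_a x, …, I_a^[n] x)` turns it into a single first-order equation
`X = A (I_a X) + G` with a constant operator `A`, so `U = I_a X` solves the linear ODE
`U' = A U + G`. Since `(e^(-tA) U)' = e^(-tA) G` is analytic, so is `e^(-tA) U`, hence `U`, and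
`X = A U + G` a.e.
-/

open MeasureTheory

open Set
open scoped Topology

section Antiderivative

variable {E F : Type*} [NormedAddCommGroup E] [NormedSpace ℝ E] [NormedAddCommGroup F]
  [NormedSpace ℝ F] [CompleteSpace F]

theorem hasFPowerSeriesOnBall_integral_unitInterval {f : E → F}
    {p : FormalMultilinearSeries ℝ E F} {x : E} {r : ENNReal} (hf : HasFPowerSeriesOnBall f p x r) :
    HasFPowerSeriesOnBall (fun y => ∫ s in (0 : ℝ)..1, f (x + s • (y - x)))
      (fun n => ((n : ℝ) + 1)⁻¹ • p n) x r where
  r_le := by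
    refine hf.r_le.trans (FormalMultilinearSeries.radius_le_of_le fun n => ?_)
    rw [norm_smul, norm_inv, Real.norm_of_nonneg (by positivity)]
    exact mul_le_of_le_one_left (norm_nonneg _) (inv_le_one_of_one_le₀ (by simp))
  r_pos := hf.r_pos
  hasSum := fun {y} hy => by
    have hnorm : ∀ s ∈ uIoc (0 : ℝ) 1, ‖s‖ ≤ 1 := fun s hs => by
      rw [uIoc_of_le zero_le_one] at hs
      exact (Real.norm_of_nonneg hs.1.le).trans_le hs.2
    have hterm (n : ℕ) (s : ℝ) : (p n fun _ => s • y) = s ^ n • p n fun _ => y := by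
      simp [(p n).map_smul_univ]
    have hsum := intervalIntegral.hasSum_integral_of_dominated_convergence (μ := volume)
      (F := fun n s => p n fun _ => s • y) (f := fun s => f (x + s • y))
      (fun n _ => ‖p n fun _ => y‖)
      (fun n => by
        simp only [hterm]
        exact (by fun_prop : Continuous fun s : ℝ => s ^ n • p n fun _ => y).aestronglyMeasurable)
      (fun n => .of_forall fun s hs => by
        rw [hterm, norm_smul, norm_pow]
        exact mul_le_of_le_one_left (norm_nonneg _) (pow_le_one₀ (norm_nonneg s) (hnorm s hs)))
      (.of_forall fun _ _ => p.summable_norm_apply (Metric.eball_subset_eball hf.r_le hy))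
      intervalIntegrable_const
      (.of_forall fun s hs => hf.hasSum <| by
        rw [mem_eball_zero_iff] at hy ⊢
        refine lt_of_le_of_lt ?_ hy
        rw [enorm_le_iff_norm_le, norm_smul]
        exact mul_le_of_le_one_left (norm_nonneg _) (hnorm s hs))
    simpa [hterm, intervalIntegral.integral_smul_const, integral_pow] using hsum

theorem analyticAt_of_eventually_hasDerivAt {f f' : ℝ → F} {x : ℝ}
    (hf' : AnalyticAt ℝ f' x) (hf : ∀ᶠ t in 𝓝 x, HasDerivAt f (f' t) t) : AnalyticAt ℝ f x := by
  obtain ⟨p, r, hp⟩ := hf'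
  obtain ⟨ε, hε, hball⟩ := Metric.eventually_nhds_iff_ball.1
    (hf.and hp.analyticAt.eventually_continuousAt)
  have hadamard : ∀ᶠ t in 𝓝 x,
      f x + (t - x) • ∫ s in (0 : ℝ)..1, f' (x + s • (t - x)) = f t := by
    filter_upwards [Metric.ball_mem_nhds x hε] with t ht
    have hmem : ∀ s ∈ Icc (0 : ℝ) 1, x + s • (t - x) ∈ Metric.ball x ε := fun s hs =>
      (convex_ball x ε).add_smul_sub_mem (Metric.mem_ball_self hε) ht hs
    rw [intervalIntegral.integral_unitInterval_deriv_eq_sub (f := f)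
      (fun s hs => ((hball _ (hmem s hs)).2.comp (f := fun s : ℝ => x + s • (t - x))
        (by fun_prop)).continuousWithinAt)
      (fun s hs => (hball _ (hmem s hs)).1)]
    simp
  have hmean := (hasFPowerSeriesOnBall_integral_unitInterval hp).analyticAt
  exact (analyticAt_const.add
    ((analyticAt_id.sub analyticAt_const).smul hmean)).congr hadamard

end Antiderivative

section LinearODE

theorem analyticAt_clm_apply {𝕜 D E F : Type*} [NontriviallyNormedField 𝕜]
    [NormedAddCommGroup D] [NormedSpace 𝕜 D] [NormedAddCommGroup E] [NormedSpace 𝕜 E]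
    [NormedAddCommGroup F] [NormedSpace 𝕜 F] {L : D → E →L[𝕜] F} {v : D → E} {x : D}
    (hL : AnalyticAt 𝕜 L x) (hv : AnalyticAt 𝕜 v x) : AnalyticAt 𝕜 (fun y => L y (v y)) x :=
  ((ContinuousLinearMap.id 𝕜 (E →L[𝕜] F)).analyticAt_bilinear (L x, v x)).comp₂ hL hv

theorem analyticAt_exp_smul_const {𝕜 𝔸 : Type*} [RCLike 𝕜] [NormedRing 𝔸] [NormedAlgebra 𝕜 𝔸]
    [CompleteSpace 𝔸] (A : 𝔸) (t : 𝕜) :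
    AnalyticAt 𝕜 (fun s : 𝕜 => NormedSpace.exp (s • A)) t :=
  (NormedSpace.exp_analytic (t • A)).comp (f := fun s : 𝕜 => s • A) (by fun_prop)

theorem analyticOnNhd_of_hasDerivAt_clm_add {E : Type*} [NormedAddCommGroup E] [NormedSpace ℝ E]
    [CompleteSpace E] {s : Set ℝ} (hs : IsOpen s) (A : E →L[ℝ] E) {u g : ℝ → E}
    (hg : AnalyticOnNhd ℝ g s) (hu : ∀ t ∈ s, HasDerivAt u (A (u t) + g t) t) :
    AnalyticOnNhd ℝ u s := by
  intro t ht
  have hw : AnalyticAt ℝ (fun r : ℝ => NormedSpace.exp (r • -A) (u r)) t := by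
    refine analyticAt_of_eventually_hasDerivAt
      (analyticAt_clm_apply (analyticAt_exp_smul_const (-A) t) (hg t ht)) ?_
    filter_upwards [hs.mem_nhds ht] with r hr
    convert! (hasDerivAt_exp_smul_const (-A) r).clm_apply (hu r hr) using 1
    simp
  refine (analyticAt_clm_apply (analyticAt_exp_smul_const A t) hw).congr (.of_forall fun r => ?_)
  have hinv : NormedSpace.exp (r • A) * NormedSpace.exp (r • -A) = 1 := by
    let _ : NormedAlgebra ℚ (E →L[ℝ] E) := .restrictScalars ℚ ℝ _
    have hcomm : Commute (r • A) (r • -A) := by rw [smul_neg]; exact (Commute.refl _).neg_right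
    rw [← NormedSpace.exp_add_of_commute hcomm, smul_neg, add_neg_cancel, NormedSpace.exp_zero]
  exact DFunLike.congr_fun hinv (u r)

end LinearODE

theorem intervalIntegrable_left_of_mem_Ioo {E : Type*} [NormedAddCommGroup E] {a b t : ℝ}
    {x : ℝ → E} (hx : IntegrableOn x (Ioo a b)) (ht : t ∈ Ioo a b) :
    IntervalIntegrable x volume a t :=
  (intervalIntegrable_iff_integrableOn_Ioc_of_le ht.1.le).2
    (hx.mono_set (Ioc_subset_Ioo_right ht.2))

/-- The indefinite-integral operator `I_a` on functions with values in a normed space; for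
real-valued functions it is `indefInt`. -/
noncomputable def indefIntegral {E : Type*} [NormedAddCommGroup E] [NormedSpace ℝ E] (a : ℝ)
    (g : ℝ → E) : ℝ → E := fun t => ∫ s in a..t, g s

section IndefIntegral

variable {E : Type*} [NormedAddCommGroup E] [NormedSpace ℝ E] {a b t : ℝ} {x y : ℝ → E}

theorem eqOn_indefIntegral_of_ae_eq (hxy : x =ᵐ[volume.restrict (Ioo a b)] y) :
    EqOn (indefIntegral a x) (indefIntegral a y) (Ioo a b) := by
  intro t ht
  refine intervalIntegral.integral_congr_ae_restrict ?_
  rw [uIoc_of_le ht.1.le]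
  exact ae_restrict_of_ae_restrict_of_subset (Ioc_subset_Ioo_right ht.2) hxy

theorem continuousOn_indefIntegral (hx : IntegrableOn x (Ioo a b)) :
    ContinuousOn (indefIntegral a x) (Icc a b) := by
  rcases lt_or_ge b a with hba | hab
  · simp [Icc_eq_empty hba.not_ge]
  · have := intervalIntegral.continuousOn_primitive_interval'
      ((intervalIntegrable_iff_integrableOn_Ioo_of_le hab).2 hx) left_mem_uIcc
    rwa [uIcc_of_le hab] at this

theorem integrableOn_indefIntegral (hx : IntegrableOn x (Ioo a b)) :
    IntegrableOn (indefIntegral a x) (Ioo a b) :=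
  (continuousOn_indefIntegral hx).integrableOn_Icc.mono_set Ioo_subset_Icc_self

theorem integrableOn_iterate_indefIntegral (hx : IntegrableOn x (Ioo a b)) (n : ℕ) :
    IntegrableOn ((indefIntegral a)^[n] x) (Ioo a b) :=
  Function.Iterate.rec (fun y : ℝ → E => IntegrableOn y (Ioo a b)) hx
    (fun _ hy => integrableOn_indefIntegral hy) n

theorem indefIntegral_sum_smul {ι 𝕜 : Type*} [Fintype ι] [NormedField 𝕜] [NormedSpace 𝕜 E]
    [SMulCommClass ℝ 𝕜 E] (c : ι → 𝕜) {y : ι → ℝ → E} (hy : ∀ i, IntegrableOn (y i) (Ioo a b))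
    (ht : t ∈ Ioo a b) :
    indefIntegral a (fun s => ∑ i, c i • y i s) t = ∑ i, c i • indefIntegral a (y i) t := by
  simp only [indefIntegral, ← intervalIntegral.integral_smul]
  exact intervalIntegral.integral_finsetSum fun i _ =>
    (intervalIntegrable_left_of_mem_Ioo (hy i) ht).smul (c i)

variable [CompleteSpace E]

theorem indefIntegral_apply {ι : Type*} [Fintype ι] {X : ℝ → ι → E}
    (hX : IntegrableOn X (Ioo a b)) (ht : t ∈ Ioo a b) (i : ι) :
    indefIntegral a X t i = indefIntegral a (fun s => X s i) t :=
  ((ContinuousLinearMap.proj (R := ℝ) (φ := fun _ : ι => E) i).intervalIntegral_comp_comm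
    (intervalIntegrable_left_of_mem_Ioo hX ht)).symm

theorem hasDerivAt_indefIntegral_of_ae_eq (hx : IntegrableOn x (Ioo a b))
    (hxy : x =ᵐ[volume.restrict (Ioo a b)] y) (hy : ContinuousOn y (Ioo a b)) (ht : t ∈ Ioo a b) :
    HasDerivAt (indefIntegral a x) (y t) t := by
  have hder : HasDerivAt (indefIntegral a y) (y t) t :=
    intervalIntegral.integral_hasDerivAt_right
      (intervalIntegrable_left_of_mem_Ioo (hx.congr_fun_ae hxy) ht)
      (hy.stronglyMeasurableAtFilter isOpen_Ioo t ht) (hy.continuousAt (isOpen_Ioo.mem_nhds ht))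
  exact hder.congr_of_eventuallyEq
    ((eqOn_indefIntegral_of_ae_eq hxy).eventuallyEq_of_mem (isOpen_Ioo.mem_nhds ht))

theorem ae_hasDerivAt_indefIntegral (hx : IntegrableOn x (Ioo a b)) :
    ∀ᵐ t ∂volume.restrict (Ioo a b), HasDerivAt (indefIntegral a x) (x t) t := by
  rw [ae_restrict_iff' measurableSet_Ioo]
  rcases lt_or_ge b a with hba | hab
  · simp [Ioo_eq_empty hba.not_gt]
  · filter_upwards [((intervalIntegrable_iff_integrableOn_Ioo_of_le hab).2
      hx).ae_hasDerivAt_integral] with t h ht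
    exact h (Ioo_subset_Icc_self.trans Icc_subset_uIcc ht) a left_mem_uIcc

theorem ae_eq_deriv_of_indefIntegral_ae_eq {f : ℝ → E} (hx : IntegrableOn x (Ioo a b))
    (hf : ContinuousOn f (Ioo a b)) (h : indefIntegral a x =ᵐ[volume.restrict (Ioo a b)] f) :
    x =ᵐ[volume.restrict (Ioo a b)] deriv f := by
  have heq : EqOn (indefIntegral a x) f (Ioo a b) :=
    Measure.eqOn_Ioo_of_ae_eq volume h
      ((continuousOn_indefIntegral hx).mono Ioo_subset_Icc_self) hf
  filter_upwards [ae_hasDerivAt_indefIntegral hx, ae_restrict_mem measurableSet_Ioo] with t hder ht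
  rw [← hder.deriv]
  exact (heq.eventuallyEq_of_mem (isOpen_Ioo.mem_nhds ht)).deriv_eq

theorem exists_analyticOnNhd_of_ae_eq_clm_indefIntegral_add (A : E →L[ℝ] E) {g : ℝ → E}
    (hx : IntegrableOn x (Ioo a b)) (hg : AnalyticOnNhd ℝ g (Ioo a b))
    (h : x =ᵐ[volume.restrict (Ioo a b)] fun t => A (indefIntegral a x t) + g t) :
    ∃ y : ℝ → E, AnalyticOnNhd ℝ y (Ioo a b) ∧ x =ᵐ[volume.restrict (Ioo a b)] y := by
  have hcont : ContinuousOn (fun t => A (indefIntegral a x t) + g t) (Ioo a b) :=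
    (A.continuous.comp_continuousOn
      ((continuousOn_indefIntegral hx).mono Ioo_subset_Icc_self)).add hg.continuousOn
  have hint : AnalyticOnNhd ℝ (indefIntegral a x) (Ioo a b) :=
    analyticOnNhd_of_hasDerivAt_clm_add isOpen_Ioo A hg fun t ht =>
      hasDerivAt_indefIntegral_of_ae_eq hx h hcont ht
  exact ⟨_, (A.comp_analyticOnNhd hint).add hg, h⟩

end IndefIntegral

section PolynomialEquation

variable {𝕜 E : Type*} [NormedField 𝕜] [NormedAddCommGroup E] [NormedSpace ℝ E] [NormedSpace 𝕜 E]
  [SMulCommClass ℝ 𝕜 E] {n : ℕ}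

variable (E) in
/-- The companion operator `v ↦ (∑ i, q i • v i, v 0, …, v (n - 1))` on `E ^ (n + 1)`. It is chosen
so that `x = ∑ i, q i • I_a^[i + 1] x + g` becomes `X = companion E q (I_a X) + (g, 0, …, 0)` for
`X = (x, I_a x, …, I_a^[n] x)`. -/
noncomputable def companion (q : Fin n → 𝕜) : (Fin (n + 1) → E) →L[ℝ] (Fin (n + 1) → E) :=
  ContinuousLinearMap.pi <| Fin.cons
    (∑ i, q i • ContinuousLinearMap.proj i.castSucc)
    (fun i => ContinuousLinearMap.proj i.castSucc)

@[simp]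
theorem companion_apply_zero (q : Fin n → 𝕜) (v : Fin (n + 1) → E) :
    companion E q v 0 = ∑ i, q i • v i.castSucc := by
  simp [companion]

@[simp]
theorem companion_apply_succ (q : Fin n → 𝕜) (v : Fin (n + 1) → E) (i : Fin n) :
    companion E q v i.succ = v i.castSucc := by
  simp [companion]

variable [CompleteSpace E] {a b : ℝ} {x : ℝ → E}

theorem exists_analyticOnNhd_of_ae_eq_sum_iterate_add {q : Fin n → 𝕜} {g : ℝ → E}
    (hx : IntegrableOn x (Ioo a b)) (hg : AnalyticOnNhd ℝ g (Ioo a b))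
    (h : x =ᵐ[volume.restrict (Ioo a b)]
      fun t => ∑ i : Fin n, q i • (indefIntegral a)^[i + 1] x t + g t) :
    ∃ y : ℝ → E, AnalyticOnNhd ℝ y (Ioo a b) ∧ x =ᵐ[volume.restrict (Ioo a b)] y := by
  let X : ℝ → Fin (n + 1) → E := fun t i => (indefIntegral a)^[i] x t
  let G : ℝ → Fin (n + 1) → E := fun t => Fin.cons (g t) 0
  have hX : IntegrableOn X (Ioo a b) :=
    Integrable.of_eval fun i => integrableOn_iterate_indefIntegral hx i
  have hG : AnalyticOnNhd ℝ G (Ioo a b) :=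
    .pi <| Fin.cases (by simpa [G] using hg) fun i => by simpa [G] using analyticOnNhd_const
  have hsystem : X =ᵐ[volume.restrict (Ioo a b)]
      fun t => companion E q (indefIntegral a X t) + G t := by
    filter_upwards [h, ae_restrict_mem measurableSet_Ioo] with t hxt ht
    have hint (i : Fin (n + 1)) : indefIntegral a X t i = (indefIntegral a)^[i + 1] x t := by
      rw [indefIntegral_apply hX ht, Function.iterate_succ_apply']
    refine funext <| Fin.cases ?_ fun i => ?_
    · simpa [hint, X, G] using hxt
    · simp [hint, X, G]
  obtain ⟨Y, hY, hXY⟩ := exists_analyticOnNhd_of_ae_eq_clm_indefIntegral_add _ hX hG hsystem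
  refine ⟨fun t => Y t 0, analyticOnNhd_pi_iff.1 hY 0, ?_⟩
  filter_upwards [hXY] with t ht using congrFun ht 0

theorem exists_analyticOnNhd_of_sum_iterate_ae_eq {p : Fin n → 𝕜} (hp : p ≠ 0) {f : ℝ → E}
    (hx : IntegrableOn x (Ioo a b)) (hf : AnalyticOnNhd ℝ f (Ioo a b))
    (h : (fun t => ∑ i, p i • (indefIntegral a)^[i] x t) =ᵐ[volume.restrict (Ioo a b)] f) :
    ∃ y : ℝ → E, AnalyticOnNhd ℝ y (Ioo a b) ∧ x =ᵐ[volume.restrict (Ioo a b)] y := by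
  induction n generalizing f with
  | zero => exact absurd (Subsingleton.elim p 0) hp
  | succ n ih =>
    simp only [Fin.sum_univ_succ, Fin.val_zero, Function.iterate_zero_apply, Fin.val_succ] at h
    by_cases hp0 : p 0 = 0
    · have htail : Fin.tail p ≠ 0 := fun h0 => hp <| funext <| Fin.cases hp0 (congrFun h0)
      have hint (i : Fin n) := integrableOn_iterate_indefIntegral hx i
      refine ih htail hf.deriv (ae_eq_deriv_of_indefIntegral_ae_eq
        (integrable_finsetSum _ fun i _ => (hint i).smul (Fin.tail p i)) hf.continuousOn ?_)
      filter_upwards [h, ae_restrict_mem measurableSet_Ioo] with t hxt ht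
      rw [indefIntegral_sum_smul _ hint ht]
      simpa [hp0, Fin.tail, Function.iterate_succ_apply'] using hxt
    · refine exists_analyticOnNhd_of_ae_eq_sum_iterate_add
        (q := fun i => -((p 0)⁻¹ * p i.succ)) hx (hf.const_smul (c := (p 0)⁻¹)) ?_
      filter_upwards [h] with t hxt
      rw [Pi.smul_apply, ← hxt]
      simp [smul_smul, hp0, Finset.smul_sum]

theorem analytic_solutions_of_integral_equation_general {c : Fin (n + 1) → 𝕜} (hc : c ≠ 0)
    {f : ℝ → E} (hx : IntegrableOn x (Ioo a b)) (hf : AnalyticOnNhd ℝ f (Ioo a b))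
    (heq : ∀ᵐ t ∂volume.restrict (Ioo a b),
      ∑ j, c j • (indefIntegral a)^[n - (j : ℕ)] x t = f t) :
    ∃ y : ℝ → E, AnalyticOnNhd ℝ y (Ioo a b) ∧ ∀ᵐ t ∂volume.restrict (Ioo a b), x t = y t := by
  have hrev : c ∘ Fin.rev ≠ 0 := fun h => hc <| funext fun i => by simpa using congrFun h i.rev
  refine exists_analyticOnNhd_of_sum_iterate_ae_eq hrev hx hf ?_
  filter_upwards [heq] with t ht
  rw [← ht, ← Equiv.sum_comp Fin.revPerm]
  simp

end PolynomialEquation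

/-- If `x` is integrable on `(a,b)`, `f` is real analytic on a neighbourhood of
each point of `(a,b)`, `c 0 ≠ 0`, and `Σ_{j=0}^{n} c_j · (I_a^[n−j] x)(t) = f(t)` a.e. on
`(a,b)`, then `x` agrees a.e. on `(a,b)` with a function real analytic on a neighbourhood of
each point of `(a,b)`. -/
theorem analytic_solutions_of_integral_equation
    (a b : ℝ) (hab : a < b) (n : ℕ) (c : Fin (n + 1) → ℝ) (hc : c 0 ≠ 0)
    (x f : ℝ → ℝ) (hx : IntegrableOn x (Set.Ioo a b))
    (hf : AnalyticOnNhd ℝ f (Set.Ioo a b))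
    (heq : ∀ᵐ t ∂(volume.restrict (Set.Ioo a b)),
      ∑ j : Fin (n + 1), c j * (indefInt a)^[n - (j : ℕ)] x t = f t) :
    ∃ y : ℝ → ℝ, AnalyticOnNhd ℝ y (Set.Ioo a b) ∧
      ∀ᵐ t ∂(volume.restrict (Set.Ioo a b)), x t = y t :=
  analytic_solutions_of_integral_equation_general (fun h => hc (congrFun h 0)) hx hf heq
end

section
/- Let a < b be real numbers, n ∈ ℕ, c : Fin (n+1) → ℝ with c 0 ≠ 0, and f : ℝ → ℝ. If x₁ and x₂ are both integrable on (a,b) and for almost every t ∈ (a,b) both satisfy Σ_{j=0}^{n} c_j · (I_a^[n−j] x_i)(t) = f(t) (i = 1,2), then x₁ = x₂ almost everywhere on (a,b). -/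
open MeasureTheory

/-!
By linearity the difference `x = x₁ - x₂` satisfies `∑ dᵢ I_a^[i] x = 0` a.e. on `(a,b)`, where
some `dᵢ` is nonzero. Let `k` be the least such `i`. Then `y = I_a^[k] x` solves a homogeneous
Volterra equation of the second kind, `d_k y + d_{k+1} I_a y + ⋯ = 0`. Hence
`|y t| ≤ C ∫_a^t |y|` a.e., and Grönwall's inequality forces `y = 0`. By Lebesgue differentiation
`I_a` is injective up to null sets, so `x = 0` a.e. as well.
-/

open Set

section Integral

variable {E : Type*} [NormedAddCommGroup E] {a b C : ℝ}

lemma eqOn_zero_of_norm_le_mul_norm_integral [NormedSpace ℝ E] [CompleteSpace E] {u : ℝ → E}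
    (hu : ContinuousOn u (Icc a b))
    (h : ∀ t ∈ Ico a b, ‖u t‖ ≤ C * ‖∫ s in a..t, u s‖) :
    EqOn u 0 (Ico a b) := by
  intro t₀ ht₀
  have hab : a ≤ b := ht₀.1.trans ht₀.2.le
  have hcont : ContinuousOn (fun t => ∫ s in a..t, u s) (Icc a b) :=
    uIcc_of_le hab ▸ intervalIntegral.continuousOn_primitive_interval'
      (hu.intervalIntegrable_of_Icc hab) left_mem_uIcc
  have hderiv : ∀ t ∈ Ico a b,
      HasDerivWithinAt (fun t => ∫ s in a..t, u s) (u t) (Ici t) t := by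
    intro t ht
    have hut : ContinuousOn u (Ico t b) :=
      hu.mono (Ico_subset_Icc_self.trans (Icc_subset_Icc_left ht.1))
    have hIco : Ico t b ∈ nhdsWithin t (Ioi t) := Ico_mem_nhdsGT ht.2
    exact intervalIntegral.integral_hasDerivWithinAt_right (t := Ioi t)
      ((hu.mono (Icc_subset_Icc_right ht.2.le)).intervalIntegrable_of_Icc ht.1)
      ⟨_, hIco, hut.aestronglyMeasurable measurableSet_Ico⟩
      ((hut t (left_mem_Ico.2 ht.2)).mono_of_mem_nhdsWithin hIco)
  have hzero : ∫ s in a..t₀, u s = 0 :=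
    eq_zero_of_abs_deriv_le_mul_abs_self_of_eq_zero_right hcont hderiv
      intervalIntegral.integral_same h t₀ (Ico_subset_Icc_self ht₀)
  simpa [hzero] using h t₀ ht₀

/-- Grönwall's inequality, applied to `∫_a^t ‖y‖`, which is continuous although `y` need not be. -/
lemma ae_eq_zero_of_norm_le_mul_integral_norm {y : ℝ → E} (hy : IntervalIntegrable y volume a b)
    (h : ∀ᵐ t ∂(volume.restrict (Ioo a b)), ‖y t‖ ≤ C * ∫ s in a..t, ‖y s‖) :
    ∀ᵐ t ∂(volume.restrict (Ioo a b)), y t = 0 := by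
  set u : ℝ → ℝ := fun t => ∫ s in a..t, ‖y s‖
  have hu_cont : ContinuousOn u (uIcc a b) :=
    intervalIntegral.continuousOn_primitive_interval' hy.norm left_mem_uIcc
  have hu_nonneg : ∀ t, a ≤ t → 0 ≤ u t := fun t ht =>
    intervalIntegral.integral_nonneg ht fun _ _ => norm_nonneg _
  have hu_zero : EqOn u 0 (Ico a b) := by
    refine eqOn_zero_of_norm_le_mul_norm_integral (C := C) (hu_cont.mono Icc_subset_uIcc) ?_
    intro t ht
    have hsub : uIcc a t ⊆ uIcc a b :=
      uIcc_subset_uIcc_left (Icc_subset_uIcc (Ico_subset_Icc_self ht))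
    have hmono : u t ≤ ∫ s in a..t, C * u s := by
      refine intervalIntegral.integral_mono_ae_restrict ht.1 (hy.norm.mono_set hsub)
        ((hu_cont.mono hsub).intervalIntegrable.const_mul C) ?_
      rw [← Measure.restrict_congr_set Ioo_ae_eq_Icc]
      exact ae_restrict_of_ae_restrict_of_subset (Ioo_subset_Ioo_right ht.2.le) h
    rwa [intervalIntegral.integral_const_mul,
      ← Real.norm_of_nonneg (hu_nonneg t ht.1), ← Real.norm_of_nonneg
        (intervalIntegral.integral_nonneg ht.1 fun s hs => hu_nonneg s hs.1)] at hmono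
  filter_upwards [h, ae_restrict_mem measurableSet_Ioo] with t hyt ht
  have hut : ∫ s in a..t, ‖y s‖ = 0 := hu_zero (Ioo_subset_Ico_self ht)
  simpa [hut] using hyt

lemma ae_eq_zero_of_ae_integral_eq_zero [NormedSpace ℝ E] [CompleteSpace E] {y : ℝ → E}
    (hy : IntervalIntegrable y volume a b)
    (h : ∀ᵐ t ∂(volume.restrict (Ioo a b)), ∫ s in a..t, y s = 0) :
    ∀ᵐ t ∂(volume.restrict (Ioo a b)), y t = 0 := by
  have hIoo : Ioo a b ⊆ uIcc a b := Ioo_subset_Icc_self.trans Icc_subset_uIcc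
  have hzero : EqOn (fun t => ∫ s in a..t, y s) 0 (Ioo a b) :=
    Measure.eqOn_open_of_ae_eq h isOpen_Ioo
      ((intervalIntegral.continuousOn_primitive_interval' hy left_mem_uIcc).mono hIoo)
      continuousOn_const
  filter_upwards [ae_restrict_of_ae hy.ae_hasDerivAt_integral,
    ae_restrict_mem measurableSet_Ioo] with t hderiv ht
  have hderiv₀ : HasDerivAt (fun t => ∫ s in a..t, y s) 0 t :=
    (hasDerivAt_const t (0 : E)).congr_of_eventuallyEq
      (hzero.eventuallyEq_of_mem (isOpen_Ioo.mem_nhds ht))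
  exact (hderiv (hIoo ht) a left_mem_uIcc).unique hderiv₀

end Integral

section IndefInt

variable {a b t : ℝ} {g h x : ℝ → ℝ} {n : ℕ}

lemma intervalIntegrable_indefInt (hg : IntervalIntegrable g volume a b) :
    IntervalIntegrable (indefInt a g) volume a b :=
  (intervalIntegral.continuousOn_primitive_interval' hg left_mem_uIcc).intervalIntegrable

lemma intervalIntegrable_iterate_indefInt (hg : IntervalIntegrable g volume a b) (m : ℕ) :
    IntervalIntegrable ((indefInt a)^[m] g) volume a b := by
  induction m with
  | zero => exact hg
  | succ m ih =>
    rw [Function.iterate_succ_apply']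
    exact intervalIntegrable_indefInt ih

lemma eqOn_iterate_indefInt_sub (hg : IntervalIntegrable g volume a b)
    (hh : IntervalIntegrable h volume a b) (m : ℕ) :
    EqOn ((indefInt a)^[m] (g - h)) ((indefInt a)^[m] g - (indefInt a)^[m] h) (uIcc a b) := by
  induction m with
  | zero => exact fun _ _ => rfl
  | succ m ih =>
    intro t ht
    have hsub : uIcc a t ⊆ uIcc a b := uIcc_subset_uIcc_left ht
    simp only [Function.iterate_succ_apply', Pi.sub_apply]
    calc indefInt a ((indefInt a)^[m] (g - h)) t
        = ∫ s in a..t, ((indefInt a)^[m] g s - (indefInt a)^[m] h s) :=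
          intervalIntegral.integral_congr (ih.mono hsub)
      _ = indefInt a ((indefInt a)^[m] g) t - indefInt a ((indefInt a)^[m] h) t :=
          intervalIntegral.integral_sub
            ((intervalIntegrable_iterate_indefInt hg m).mono_set hsub)
            ((intervalIntegrable_iterate_indefInt hh m).mono_set hsub)

lemma abs_iterate_succ_indefInt_le (hat : a ≤ t) (hg : IntervalIntegrable g volume a t) (m : ℕ) :
    |(indefInt a)^[m + 1] g t| ≤ (t - a) ^ m * ∫ s in a..t, |g s| := by
  induction m generalizing t with
  | zero => simpa [indefInt] using intervalIntegral.abs_integral_le_integral_abs (f := g) hat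
  | succ m ih =>
    have hbound : ∀ s ∈ Ioc a t,
        |(indefInt a)^[m + 1] g s| ≤ (t - a) ^ m * ∫ r in a..t, |g r| := by
      intro s ⟨has, hst⟩
      have hgs : IntervalIntegrable g volume a s :=
        hg.mono_set (uIcc_subset_uIcc_left (Icc_subset_uIcc ⟨has.le, hst⟩))
      have hmono : ∫ r in a..s, |g r| ≤ ∫ r in a..t, |g r| :=
        intervalIntegral.integral_mono_interval le_rfl has.le hst
          (Filter.Eventually.of_forall fun _ => abs_nonneg _) hg.abs
      have hint : 0 ≤ ∫ r in a..s, |g r| :=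
        intervalIntegral.integral_nonneg has.le fun _ _ => abs_nonneg _
      exact (ih has.le hgs).trans (by gcongr)
    rw [Function.iterate_succ_apply']
    calc |indefInt a ((indefInt a)^[m + 1] g) t|
        = ‖∫ s in a..t, (indefInt a)^[m + 1] g s‖ := rfl
      _ ≤ ((t - a) ^ m * ∫ r in a..t, |g r|) * |t - a| :=
          intervalIntegral.norm_integral_le_of_norm_le_const fun s hs =>
            hbound s (uIoc_of_le hat ▸ hs)
      _ = (t - a) ^ (m + 1) * ∫ r in a..t, |g r| := by
          rw [abs_of_nonneg (sub_nonneg.2 hat)]; ring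

lemma ae_eq_zero_of_sum_iterate_indefInt_of_ne_zero {d : Fin (n + 1) → ℝ} (hd : d 0 ≠ 0)
    (hx : IntervalIntegrable x volume a b)
    (h : ∀ᵐ t ∂(volume.restrict (Ioo a b)), ∑ i, d i * (indefInt a)^[i] x t = 0) :
    ∀ᵐ t ∂(volume.restrict (Ioo a b)), x t = 0 := by
  refine ae_eq_zero_of_norm_le_mul_integral_norm hx
    (C := |d 0|⁻¹ * ∑ i : Fin n, |d i.succ| * (b - a) ^ (i : ℕ)) ?_
  filter_upwards [h, ae_restrict_mem measurableSet_Ioo] with t hsum ⟨hat, htb⟩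
  have hxt : IntervalIntegrable x volume a t :=
    hx.mono_set (uIcc_subset_uIcc_left (Icc_subset_uIcc ⟨hat.le, htb.le⟩))
  have hlead : d 0 * x t = -∑ i : Fin n, d i.succ * (indefInt a)^[i + 1] x t := by
    rw [Fin.sum_univ_succ] at hsum
    exact eq_neg_of_add_eq_zero_left hsum
  have hterm (i : Fin n) : |(indefInt a)^[i + 1] x t| ≤ (b - a) ^ (i : ℕ) * ∫ s in a..t, |x s| := by
    have hint : 0 ≤ ∫ s in a..t, |x s| :=
      intervalIntegral.integral_nonneg hat.le fun _ _ => abs_nonneg _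
    exact (abs_iterate_succ_indefInt_le hat.le hxt i).trans (by gcongr)
  rw [mul_assoc, le_inv_mul_iff₀ (abs_pos.2 hd)]
  calc |d 0| * |x t|
      = |∑ i : Fin n, d i.succ * (indefInt a)^[i + 1] x t| := by rw [← abs_mul, hlead, abs_neg]
    _ ≤ ∑ i : Fin n, |d i.succ| * |(indefInt a)^[i + 1] x t| := by
        simp only [← abs_mul]; exact Finset.abs_sum_le_sum_abs _ _
    _ ≤ ∑ i : Fin n, |d i.succ| * ((b - a) ^ (i : ℕ) * ∫ s in a..t, |x s|) := by
        gcongr with i; exact hterm i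
    _ = (∑ i : Fin n, |d i.succ| * (b - a) ^ (i : ℕ)) * ∫ s in a..t, |x s| := by
        simp only [Finset.sum_mul, mul_assoc]

lemma ae_eq_zero_of_sum_iterate_indefInt {d : Fin n → ℝ} (hd : d ≠ 0)
    (hx : IntervalIntegrable x volume a b)
    (h : ∀ᵐ t ∂(volume.restrict (Ioo a b)), ∑ i, d i * (indefInt a)^[i] x t = 0) :
    ∀ᵐ t ∂(volume.restrict (Ioo a b)), x t = 0 := by
  induction n generalizing x with
  | zero => exact absurd (Subsingleton.elim d 0) hd
  | succ n ih =>
    by_cases hd₀ : d 0 = 0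
    · have htail : Fin.tail d ≠ 0 := fun h₀ => hd (funext (Fin.cases hd₀ (congrFun h₀)))
      have hshift : ∀ᵐ t ∂(volume.restrict (Ioo a b)),
          ∑ i, Fin.tail d i * (indefInt a)^[i] (indefInt a x) t = 0 := by
        filter_upwards [h] with t ht
        simpa [Fin.sum_univ_succ, Fin.tail, hd₀] using ht
      exact ae_eq_zero_of_ae_integral_eq_zero hx (ih htail (intervalIntegrable_indefInt hx) hshift)
    · exact ae_eq_zero_of_sum_iterate_indefInt_of_ne_zero hd₀ hx h

end IndefInt

theorem integral_equation_uniqueness_general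
    {a b : ℝ} {n : ℕ} {c : Fin (n + 1) → ℝ} (hc : c ≠ 0) {f x₁ x₂ : ℝ → ℝ}
    (hx₁ : IntervalIntegrable x₁ volume a b) (hx₂ : IntervalIntegrable x₂ volume a b)
    (heq₁ : ∀ᵐ t ∂(volume.restrict (Ioo a b)),
      ∑ j : Fin (n + 1), c j * (indefInt a)^[n - (j : ℕ)] x₁ t = f t)
    (heq₂ : ∀ᵐ t ∂(volume.restrict (Ioo a b)),
      ∑ j : Fin (n + 1), c j * (indefInt a)^[n - (j : ℕ)] x₂ t = f t) :
    ∀ᵐ t ∂(volume.restrict (Ioo a b)), x₁ t = x₂ t := by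
  have hc_rev : c ∘ Fin.rev ≠ 0 := fun h => hc (funext fun j => by simpa using congrFun h j.rev)
  have hdiff : ∀ᵐ t ∂(volume.restrict (Ioo a b)),
      ∑ i : Fin (n + 1), (c ∘ Fin.rev) i * (indefInt a)^[i] (x₁ - x₂) t = 0 := by
    filter_upwards [heq₁, heq₂, ae_restrict_mem measurableSet_Ioo] with t h₁ h₂ ht
    have hsub (m : ℕ) := eqOn_iterate_indefInt_sub hx₁ hx₂ m
      (Icc_subset_uIcc (Ioo_subset_Icc_self ht))
    rw [← Equiv.sum_comp Fin.revPerm]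
    simp [hsub, mul_sub, Finset.sum_sub_distrib, h₁, h₂]
  filter_upwards [ae_eq_zero_of_sum_iterate_indefInt hc_rev (hx₁.sub hx₂) hdiff] with t ht
  exact sub_eq_zero.1 ht

/-- If `x₁` and `x₂` are integrable on `(a,b)`, `c 0 ≠ 0`, and both satisfy
`Σ_{j=0}^{n} c_j · (I_a^[n−j] x_i)(t) = f(t)` a.e. on `(a,b)`, then `x₁ = x₂` a.e. on
`(a,b)`. -/
theorem integral_equation_uniqueness
    (a b : ℝ) (hab : a < b) (n : ℕ) (c : Fin (n + 1) → ℝ) (hc : c 0 ≠ 0) (f : ℝ → ℝ)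
    (x₁ x₂ : ℝ → ℝ)
    (hx₁ : IntegrableOn x₁ (Set.Ioo a b)) (hx₂ : IntegrableOn x₂ (Set.Ioo a b))
    (heq₁ : ∀ᵐ t ∂(volume.restrict (Set.Ioo a b)),
      ∑ j : Fin (n + 1), c j * (indefInt a)^[n - (j : ℕ)] x₁ t = f t)
    (heq₂ : ∀ᵐ t ∂(volume.restrict (Set.Ioo a b)),
      ∑ j : Fin (n + 1), c j * (indefInt a)^[n - (j : ℕ)] x₂ t = f t) :
    ∀ᵐ t ∂(volume.restrict (Set.Ioo a b)), x₁ t = x₂ t :=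
  integral_equation_uniqueness_general (fun h => hc (congrFun h 0))
    ((intervalIntegrable_iff_integrableOn_Ioo_of_le hab.le).2 hx₁)
    ((intervalIntegrable_iff_integrableOn_Ioo_of_le hab.le).2 hx₂) heq₁ heq₂
end

section
/- Let a < b be real numbers, l ≥ 1, let α : Fin l → ℚ be pairwise distinct nonnegative rational numbers, and let c : Fin l → ℂ be coefficients that are not all zero. If x₁ and x₂ are both integrable on (a,b) and for almost every t ∈ (a,b) one has Σ_{i} c_i · (I_{a+}^{α_i} x₁)(t) = Σ_{i} c_i · (I_{a+}^{α_i} x₂)(t), then x₁ = x₂ almost everywhere on (a,b). In other words, a linear fractional-order integral equation with constant coefficients and rational orders has at most one solution in L¹(a,b). -/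
/-!
Damping turns fractional integration into convolution by an integrable kernel: with
`u(s) = e^{-rs} x(s)` on `(a,b)` and `u = 0` elsewhere, `e^{-rt} (I_{a+}^β x)(t)` is the convolution
of `u` with `t₊^{β-1} e^{-rt} / Γ(β)`, which has `L¹` norm `r^{-β}`. Call this operator `J^β`. The
Beta integral gives `J^β J^γ = J^{β+γ}`, and every `J^β` is injective on each half-line `(-∞, b)`:
composing with `J^{⌈β⌉-β}` reduces to an integer order, hence to order one, where Lebesgue
differentiation applies.

By linearity it suffices to treat `∑ cᵢ I^{αᵢ} x = 0`. Factoring out the lowest order `m` with a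
nonzero coefficient `c₀` gives `J^m (c₀ u + ∑ cᵢ J^{αᵢ-m} u) = 0` on `(-∞, b)`, so by injectivity
`c₀ u = -∑ cᵢ J^{αᵢ-m} u`, a Volterra equation of the second kind. All the `αᵢ - m` are positive, so
for large `r` the right-hand side has `L¹` norm less than `|c₀| ‖u‖` unless `u = 0`.
-/

open MeasureTheory

/-- The left Riemann–Liouville fractional integral of order `α ≥ 0` from `a`:
`(I_{a+}^α x)(t) = (1/Γ(α)) ∫_a^t (t−s)^(α−1) x(s) ds` for `α > 0`, and the identity for
`α = 0`. -/
noncomputable def rlInt (a : ℝ) (α : ℝ) (x : ℝ → ℂ) : ℝ → ℂ :=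
  if α = 0 then x
  else fun t => (Real.Gamma α)⁻¹ • ∫ s in a..t, ((t - s) ^ (α - 1) : ℝ) • x s

open Set Filter Topology
open ContinuousLinearMap (lsmul)
open scoped Convolution

/-! ### Convolution of integrable functions -/

section Convolution

variable {G E : Type*} [AddCommGroup G] [MeasurableSpace G] [MeasurableAdd₂ G] [MeasurableNeg G]
  {μ : Measure G} [SFinite μ] [μ.IsAddLeftInvariant]
  [NormedAddCommGroup E] [NormedSpace ℝ E]

lemma ae_convolution_assoc [CompleteSpace E] {f g : G → ℝ} {u : G → E}
    (hf : Integrable f μ) (hg : Integrable g μ) (hu : Integrable u μ) :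
    (f ⋆[lsmul ℝ ℝ, μ] g) ⋆[lsmul ℝ ℝ, μ] u =ᵐ[μ] f ⋆[lsmul ℝ ℝ, μ] (g ⋆[lsmul ℝ ℝ, μ] u) := by
  filter_upwards [hf.norm.ae_convolution_exists (.mul ℝ ℝ)
    (hg.norm.integrable_convolution (.mul ℝ ℝ) hu.norm)] with t ht
  exact convolution_assoc _ _ _ _ (fun x y z => mul_smul x y z) hf.1 hg.1 hu.1
    (hf.ae_convolution_exists _ hg) (hg.norm.ae_convolution_exists _ hu.norm) ht

lemma integral_norm_convolution_le {f : G → ℝ} {u : G → E}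
    (hf : Integrable f μ) (hu : Integrable u μ) :
    ∫ t, ‖(f ⋆[lsmul ℝ ℝ, μ] u) t‖ ∂μ ≤ (∫ t, ‖f t‖ ∂μ) * ∫ t, ‖u t‖ ∂μ :=
  calc ∫ t, ‖(f ⋆[lsmul ℝ ℝ, μ] u) t‖ ∂μ
      ≤ ∫ t, ((‖f ·‖) ⋆[lsmul ℝ ℝ, μ] (‖u ·‖)) t ∂μ := by
        refine integral_mono (hf.integrable_convolution _ hu).norm
          (hf.norm.integrable_convolution _ hu.norm) fun t => ?_
        simpa only [convolution_lsmul, norm_smul, smul_eq_mul] using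
          norm_integral_le_integral_norm fun s => f s • u (t - s)
    _ = (∫ t, ‖f t‖ ∂μ) * ∫ t, ‖u t‖ ∂μ := integral_convolution (lsmul ℝ ℝ) hf.norm hu.norm

end Convolution

/-! ### Damped kernels -/

/-- The exponentially damped Riemann–Liouville kernel `t₊^(β-1) e^(-rt) / Γ(β)`, integrable on the
whole line for `r, β > 0`. -/
noncomputable def rlKernel (r β : ℝ) : ℝ → ℝ :=
  (Ioi 0).indicator fun t => Real.exp (-(r * t)) * ((Real.Gamma β)⁻¹ * t ^ (β - 1))

section Kernel

variable {E : Type*} [NormedAddCommGroup E] [NormedSpace ℝ E] {r β γ s t : ℝ}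

lemma rlKernel_of_pos (ht : 0 < t) :
    rlKernel r β t = Real.exp (-(r * t)) * ((Real.Gamma β)⁻¹ * t ^ (β - 1)) :=
  indicator_of_mem (mem_Ioi.2 ht) _

lemma rlKernel_of_nonpos (ht : t ≤ 0) : rlKernel r β t = 0 :=
  indicator_of_notMem (notMem_Ioi.2 ht) _

lemma rlKernel_nonneg (hβ : 0 < β) (t : ℝ) : 0 ≤ rlKernel r β t :=
  indicator_nonneg (fun t (ht : 0 < t) => by
    have := Real.Gamma_pos_of_pos hβ
    positivity) t

lemma integral_rlKernel (hr : 0 < r) (hβ : 0 < β) : ∫ t, rlKernel r β t = r ^ (-β) := by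
  have hΓ := (Real.Gamma_pos_of_pos hβ).ne'
  simp only [rlKernel, integral_indicator measurableSet_Ioi, mul_left_comm (Real.exp _)]
  simp only [mul_comm (Real.exp _)]
  rw [integral_const_mul, Real.integral_rpow_mul_exp_neg_mul_Ioi hβ hr, mul_comm, mul_assoc,
    mul_inv_cancel₀ hΓ, mul_one, one_div, Real.inv_rpow hr.le, Real.rpow_neg hr.le]

lemma integrable_rlKernel (hr : 0 < r) (hβ : 0 < β) : Integrable (rlKernel r β) :=
  .of_integral_ne_zero (by rw [integral_rlKernel hr hβ]; positivity)

lemma integral_norm_rlKernel (hr : 0 < r) (hβ : 0 < β) :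
    ∫ t, ‖rlKernel r β t‖ = r ^ (-β) := by
  simp only [Real.norm_of_nonneg (rlKernel_nonneg hβ _), integral_rlKernel hr hβ]

lemma rlKernel_convolution_apply (u : ℝ → E) (t : ℝ) :
    (rlKernel r β ⋆ u) t = Real.exp (-(r * t)) • (Real.Gamma β)⁻¹ •
      ∫ s in Iio t, (t - s) ^ (β - 1) • Real.exp (r * s) • u s := by
  rw [convolution_lsmul_swap, ← integral_smul, ← integral_smul,
    ← integral_indicator measurableSet_Iio]
  congr with s
  rcases lt_or_ge s t with hs | hs
  · rw [indicator_of_mem (mem_Iio.2 hs), rlKernel_of_pos (sub_pos.2 hs)]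
    have hexp : Real.exp (-(r * (t - s))) = Real.exp (-(r * t)) * Real.exp (r * s) := by
      rw [← Real.exp_add]
      ring_nf
    simp only [hexp, smul_smul]
    ring_nf
  · rw [indicator_of_notMem (notMem_Iio.2 hs), rlKernel_of_nonpos (sub_nonpos.2 hs), zero_smul]

lemma integral_rpow_mul_sub_rpow (hβ : 0 < β) (hγ : 0 < γ) (ht : 0 < t) :
    ∫ s in 0..t, s ^ (β - 1) * (t - s) ^ (γ - 1) =
      t ^ (β + γ - 1) * ProbabilityTheory.beta β γ := by
  have hcast : ∀ s ∈ uIcc 0 t, ((s ^ (β - 1) * (t - s) ^ (γ - 1) : ℝ) : ℂ) =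
      (s : ℂ) ^ ((β : ℂ) - 1) * ((t : ℂ) - s) ^ ((γ : ℂ) - 1) := fun s hs => by
    rw [uIcc_of_le ht.le] at hs
    push_cast [Complex.ofReal_cpow hs.1, Complex.ofReal_cpow (sub_nonneg.2 hs.2)]
    rfl
  rw [← Complex.ofReal_inj, ← intervalIntegral.integral_ofReal,
    intervalIntegral.integral_congr hcast, Complex.betaIntegral_scaled _ _ ht,
    Complex.betaIntegral_eq_Gamma_mul_div _ _ (by simpa) (by simpa), ProbabilityTheory.beta]
  push_cast [Complex.ofReal_cpow ht.le, ← Complex.Gamma_ofReal]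
  rfl

lemma rlKernel_convolution_rlKernel (hβ : 0 < β) (hγ : 0 < γ) :
    rlKernel r β ⋆ rlKernel r γ = rlKernel r (β + γ) := by
  funext t
  have hintegrand : ∀ s, Real.exp (r * s) * rlKernel r γ s =
      (Ioi 0).indicator (fun s => (Real.Gamma γ)⁻¹ * s ^ (γ - 1)) s := fun s => by
    rcases lt_or_ge 0 s with hs | hs
    · rw [rlKernel_of_pos hs, indicator_of_mem (mem_Ioi.2 hs), ← mul_assoc, ← Real.exp_add,
        add_neg_cancel, Real.exp_zero, one_mul]
    · rw [rlKernel_of_nonpos hs, indicator_of_notMem (notMem_Ioi.2 hs), mul_zero]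
  simp only [rlKernel_convolution_apply, smul_eq_mul, hintegrand,
    ← indicator_mul_right (Ioi 0) fun s => (t - s) ^ (β - 1)]
  rw [setIntegral_indicator measurableSet_Ioi, Iio_inter_Ioi]
  rcases le_or_gt t 0 with ht | ht
  · simp [Ioo_eq_empty_of_le ht, rlKernel_of_nonpos ht]
  have hβΓ := (Real.Gamma_pos_of_pos hβ).ne'
  have hγΓ := (Real.Gamma_pos_of_pos hγ).ne'
  rw [← integral_Ioc_eq_integral_Ioo, ← intervalIntegral.integral_of_le ht.le]
  simp only [mul_left_comm _ (Real.Gamma γ)⁻¹, intervalIntegral.integral_const_mul]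
  simp only [mul_comm ((t - _) ^ (β - 1))]
  rw [integral_rpow_mul_sub_rpow hγ hβ ht, rlKernel_of_pos ht, ProbabilityTheory.beta,
    add_comm γ β]
  field_simp

end Kernel

/-! ### Damped fractional integrals -/

/-- The damped fractional integral of order `β ≥ 0` based at `-∞`, that is, `e^(-rt) I^β e^(rt)`.
As for `rlInt`, order `0` is treated separately, since `rlKernel r 0 = 0` (`Γ(0)⁻¹ = 0`). -/
noncomputable def dampedRlInt {E : Type*} [NormedAddCommGroup E] [NormedSpace ℝ E]
    (r β : ℝ) (u : ℝ → E) : ℝ → E :=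
  if β = 0 then u else rlKernel r β ⋆ u

section DampedRlInt

variable {E : Type*} [NormedAddCommGroup E] [NormedSpace ℝ E] {r β γ b : ℝ} {u v : ℝ → E}

@[simp]
lemma dampedRlInt_zero (r : ℝ) (u : ℝ → E) : dampedRlInt r 0 u = u :=
  if_pos rfl

lemma dampedRlInt_of_ne_zero (hβ : β ≠ 0) : dampedRlInt r β u = rlKernel r β ⋆ u :=
  if_neg hβ

lemma integrable_dampedRlInt (hr : 0 < r) (hβ : 0 ≤ β) (hu : Integrable u) :
    Integrable (dampedRlInt r β u) := by
  rcases hβ.eq_or_lt with rfl | hβ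
  · rwa [dampedRlInt_zero]
  · rw [dampedRlInt_of_ne_zero hβ.ne']
    exact (integrable_rlKernel hr hβ).integrable_convolution _ hu

lemma integral_norm_dampedRlInt_le (hr : 0 < r) (hβ : 0 ≤ β) (hu : Integrable u) :
    ∫ t, ‖dampedRlInt r β u t‖ ≤ r ^ (-β) * ∫ t, ‖u t‖ := by
  rcases hβ.eq_or_lt with rfl | hβ
  · simp
  · rw [dampedRlInt_of_ne_zero hβ.ne', ← integral_norm_rlKernel hr hβ]
    exact integral_norm_convolution_le (integrable_rlKernel hr hβ) hu

lemma dampedRlInt_add (hr : 0 < r) (hβ : 0 ≤ β) (hu : Integrable u) (hv : Integrable v) :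
    dampedRlInt r β (u + v) =ᵐ[volume] dampedRlInt r β u + dampedRlInt r β v := by
  rcases hβ.eq_or_lt with rfl | hβ
  · simp
  · have hk := integrable_rlKernel hr hβ
    simp only [dampedRlInt_of_ne_zero hβ.ne']
    filter_upwards [hk.ae_convolution_exists (lsmul ℝ ℝ) hu,
      hk.ae_convolution_exists (lsmul ℝ ℝ) hv] with t htu htv
    exact htu.distrib_add htv

lemma dampedRlInt_const_smul {𝕜 : Type*} [NormedField 𝕜] [NormedSpace 𝕜 E] [SMulCommClass ℝ 𝕜 E]
    (c : 𝕜) (u : ℝ → E) : dampedRlInt r β (c • u) = c • dampedRlInt r β u := by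
  unfold dampedRlInt
  split_ifs
  · rfl
  · ext t
    simp only [convolution_lsmul, Pi.smul_apply, smul_comm _ c, integral_smul]

lemma dampedRlInt_sub (hr : 0 < r) (hβ : 0 ≤ β) (hu : Integrable u) (hv : Integrable v) :
    dampedRlInt r β (u - v) =ᵐ[volume] dampedRlInt r β u - dampedRlInt r β v := by
  have hneg : dampedRlInt r β (-v) = -dampedRlInt r β v := by
    simpa using dampedRlInt_const_smul (-1 : ℝ) v
  simpa only [sub_eq_add_neg, hneg] using dampedRlInt_add hr hβ hu hv.neg

lemma dampedRlInt_sum {ι : Type*} (hr : 0 < r) (hβ : 0 ≤ β) {s : Finset ι} {f : ι → ℝ → E}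
    (hf : ∀ i ∈ s, Integrable (f i)) :
    dampedRlInt r β (∑ i ∈ s, f i) =ᵐ[volume] ∑ i ∈ s, dampedRlInt r β (f i) := by
  classical
  induction s using Finset.induction_on with
  | empty => simp [dampedRlInt]
  | insert i s hi ih =>
    rw [Finset.forall_mem_insert] at hf
    simp only [Finset.sum_insert hi]
    exact (dampedRlInt_add hr hβ hf.1 (integrable_finsetSum' s hf.2)).trans
      (ae_eq_rfl.add (ih hf.2))

lemma dampedRlInt_dampedRlInt [CompleteSpace E] (hr : 0 < r) (hβ : 0 ≤ β) (hγ : 0 ≤ γ)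
    (hu : Integrable u) :
    dampedRlInt r β (dampedRlInt r γ u) =ᵐ[volume] dampedRlInt r (β + γ) u := by
  rcases hβ.eq_or_lt with rfl | hβ
  · simp
  rcases hγ.eq_or_lt with rfl | hγ
  · simp
  simp only [dampedRlInt_of_ne_zero hβ.ne', dampedRlInt_of_ne_zero hγ.ne',
    dampedRlInt_of_ne_zero (add_pos hβ hγ).ne', ← rlKernel_convolution_rlKernel hβ hγ]
  exact (ae_convolution_assoc (integrable_rlKernel hr hβ) (integrable_rlKernel hr hγ) hu).symm

/-- Causality: the value at `t` only depends on the past of `t`. -/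
lemma dampedRlInt_ae_eq_zero (hu : u =ᵐ[volume.restrict (Iio b)] 0) :
    dampedRlInt r β u =ᵐ[volume.restrict (Iio b)] 0 := by
  rcases eq_or_ne β 0 with rfl | hβ
  · rwa [dampedRlInt_zero]
  filter_upwards [ae_restrict_mem measurableSet_Iio] with t ht
  have hpast : u =ᵐ[volume.restrict (Iio t)] 0 :=
    ae_restrict_of_ae_restrict_of_subset (Iio_subset_Iio (le_of_lt ht)) hu
  rw [dampedRlInt_of_ne_zero hβ, rlKernel_convolution_apply, integral_eq_zero_of_ae]
  · simp
  · filter_upwards [hpast] with s hs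
    simp [hs]

end DampedRlInt

/-! ### Injectivity on half-lines -/

section Injectivity

variable {E : Type*} [NormedAddCommGroup E] [NormedSpace ℝ E] [CompleteSpace E]
  {r β b : ℝ} {u : ℝ → E}

lemma ae_eq_zero_of_ae_setIntegral_Iio_eq_zero {f : ℝ → E} (hf : IntegrableOn f (Iio b))
    (h : ∀ᵐ t ∂volume.restrict (Iio b), ∫ s in Iio t, f s = 0) :
    f =ᵐ[volume.restrict (Iio b)] 0 := by
  set g := (Iio b).indicator f
  have hg : Integrable g := hf.integrable_indicator measurableSet_Iio
  have hprimitive : (fun t => ∫ s in b..t, g s) =ᵐ[volume.restrict (Iio b)]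
      fun _ => -∫ s in Iic b, g s := by
    filter_upwards [h, ae_restrict_mem measurableSet_Iio] with t ht htb
    have hgt : ∫ s in Iic t, g s = 0 := by
      rw [integral_Iic_eq_integral_Iio, setIntegral_indicator measurableSet_Iio, Iio_inter_Iio,
        inf_eq_left.2 (le_of_lt htb), ht]
    rw [← intervalIntegral.integral_Iic_sub_Iic hg.integrableOn hg.integrableOn, hgt, zero_sub]
  have hconst : EqOn (fun t => ∫ s in b..t, g s) (fun _ => -∫ s in Iic b, g s) (Iio b) :=
    Measure.eqOn_open_of_ae_eq hprimitive isOpen_Iio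
      (intervalIntegral.continuous_primitive (fun _ _ => hg.intervalIntegrable) b).continuousOn
      continuousOn_const
  filter_upwards [ae_restrict_of_ae (LocallyIntegrable.ae_hasDerivAt_integral hg.locallyIntegrable),
    ae_restrict_mem measurableSet_Iio] with t hderiv htb
  have hderiv₀ : HasDerivAt (fun t => ∫ s in b..t, g s) 0 t :=
    (hasDerivAt_const t _).congr_of_eventuallyEq
      (hconst.eventuallyEq_of_mem (Iio_mem_nhds htb))
  rw [← indicator_of_mem htb f]
  exact (hderiv b).unique hderiv₀

lemma ae_eq_zero_of_dampedRlInt_one (hr : 0 ≤ r) (hu : Integrable u)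
    (h : dampedRlInt r 1 u =ᵐ[volume.restrict (Iio b)] 0) :
    u =ᵐ[volume.restrict (Iio b)] 0 := by
  have hbdd : ∀ᵐ s ∂volume.restrict (Iio b), ‖Real.exp (r * s)‖ ≤ Real.exp (r * b) := by
    filter_upwards [ae_restrict_mem measurableSet_Iio] with s (hs : s < b)
    rw [Real.norm_of_nonneg (Real.exp_nonneg _)]
    gcongr
  have hint : IntegrableOn (fun s => Real.exp (r * s) • u s) (Iio b) :=
    hu.integrableOn.bdd_smul (Real.exp (r * b)) (by fun_prop) hbdd
  have hzero : ∀ᵐ t ∂volume.restrict (Iio b), ∫ s in Iio t, Real.exp (r * s) • u s = 0 := by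
    filter_upwards [h] with t ht
    simpa [dampedRlInt_of_ne_zero, rlKernel_convolution_apply] using ht
  filter_upwards [ae_eq_zero_of_ae_setIntegral_Iio_eq_zero hint hzero] with s hs
  exact (smul_eq_zero.1 hs).resolve_left (Real.exp_ne_zero _)

lemma ae_eq_zero_of_dampedRlInt_natCast (hr : 0 < r) (n : ℕ) (hu : Integrable u)
    (h : dampedRlInt r n u =ᵐ[volume.restrict (Iio b)] 0) :
    u =ᵐ[volume.restrict (Iio b)] 0 := by
  induction n with
  | zero => simpa using h
  | succ n ih =>
    have hn : (0 : ℝ) ≤ n := n.cast_nonneg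
    refine ih (ae_eq_zero_of_dampedRlInt_one hr.le (integrable_dampedRlInt hr hn hu) ?_)
    rw [Nat.cast_succ, add_comm] at h
    exact (dampedRlInt_dampedRlInt hr zero_le_one hn hu).restrict.trans h

lemma ae_eq_zero_of_dampedRlInt (hr : 0 < r) (hβ : 0 ≤ β) (hu : Integrable u)
    (h : dampedRlInt r β u =ᵐ[volume.restrict (Iio b)] 0) :
    u =ᵐ[volume.restrict (Iio b)] 0 := by
  refine ae_eq_zero_of_dampedRlInt_natCast hr ⌈β⌉₊ hu ?_
  have hcomp := dampedRlInt_dampedRlInt hr (sub_nonneg.2 (Nat.le_ceil β)) hβ hu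
  rw [sub_add_cancel] at hcomp
  exact hcomp.symm.restrict.trans (dampedRlInt_ae_eq_zero h)

end Injectivity

/-! ### Equations in damped fractional integrals -/

section DampedEquation

variable {E 𝕜 ι : Type*} [NormedAddCommGroup E] [NormedSpace ℝ E] [NormedField 𝕜] [NormedSpace 𝕜 E]
  {r b : ℝ} {u : ℝ → E} {s : Finset ι} {c₀ : 𝕜} {c : ι → 𝕜}

lemma integrable_sum_smul_dampedRlInt (hr : 0 < r) {δ : ι → ℝ} (hδ : ∀ i ∈ s, 0 ≤ δ i)
    (hu : Integrable u) : Integrable (∑ i ∈ s, c i • dampedRlInt r (δ i) u) :=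
  integrable_finsetSum' s fun i hi => (integrable_dampedRlInt hr (hδ i hi) hu).smul (c i)

lemma integral_norm_sum_smul_dampedRlInt_le (hr : 0 < r) {δ : ι → ℝ} (hδ : ∀ i ∈ s, 0 ≤ δ i)
    (hu : Integrable u) :
    ∫ t, ‖(∑ i ∈ s, c i • dampedRlInt r (δ i) u) t‖ ≤
      (∑ i ∈ s, ‖c i‖ * r ^ (-δ i)) * ∫ t, ‖u t‖ := by
  have hint : ∀ i ∈ s, Integrable fun t => ‖c i‖ * ‖dampedRlInt r (δ i) u t‖ :=
    fun i hi => (integrable_dampedRlInt hr (hδ i hi) hu).norm.const_mul _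
  calc ∫ t, ‖(∑ i ∈ s, c i • dampedRlInt r (δ i) u) t‖
      ≤ ∫ t, ∑ i ∈ s, ‖c i‖ * ‖dampedRlInt r (δ i) u t‖ := by
        refine integral_mono (integrable_sum_smul_dampedRlInt hr hδ hu).norm
          (integrable_finsetSum s hint) fun t => ?_
        simpa only [Finset.sum_apply, Pi.smul_apply, norm_smul] using
          norm_sum_le s fun i => c i • dampedRlInt r (δ i) u t
    _ = ∑ i ∈ s, ‖c i‖ * ∫ t, ‖dampedRlInt r (δ i) u t‖ := by
        rw [integral_finsetSum s hint]
        simp only [integral_const_mul]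
    _ ≤ ∑ i ∈ s, ‖c i‖ * (r ^ (-δ i) * ∫ t, ‖u t‖) := by
        gcongr with i hi
        exact integral_norm_dampedRlInt_le hr (hδ i hi) hu
    _ = (∑ i ∈ s, ‖c i‖ * r ^ (-δ i)) * ∫ t, ‖u t‖ := by
        simp only [Finset.sum_mul, mul_assoc]

lemma ae_eq_zero_of_smul_add_sum_smul_dampedRlInt (hr : 0 < r) {δ : ι → ℝ}
    (hδ : ∀ i ∈ s, 0 ≤ δ i) (hsmall : ∑ i ∈ s, ‖c i‖ * r ^ (-δ i) < ‖c₀‖)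
    (hu : Integrable u) (hsupp : Function.support u ⊆ Iio b)
    (h : c₀ • u + ∑ i ∈ s, c i • dampedRlInt r (δ i) u =ᵐ[volume.restrict (Iio b)] 0) :
    u =ᵐ[volume] 0 := by
  set v := ∑ i ∈ s, c i • dampedRlInt r (δ i) u
  have hpointwise : ∀ᵐ t, ‖c₀‖ * ‖u t‖ ≤ ‖v t‖ := by
    filter_upwards [(ae_restrict_iff' measurableSet_Iio).1 h] with t ht
    by_cases htb : t ∈ Iio b
    · rw [← norm_smul, ← norm_neg (v t)]
      exact (congrArg norm (eq_neg_of_add_eq_zero_left (ht htb))).le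
    · simp [Function.notMem_support.1 fun htu => htb (hsupp htu)]
  have hnorm : ‖c₀‖ * ∫ t, ‖u t‖ ≤ (∑ i ∈ s, ‖c i‖ * r ^ (-δ i)) * ∫ t, ‖u t‖ :=
    calc ‖c₀‖ * ∫ t, ‖u t‖ = ∫ t, ‖c₀‖ * ‖u t‖ := (integral_const_mul _ _).symm
      _ ≤ ∫ t, ‖v t‖ := integral_mono_ae (hu.norm.const_mul _)
        (integrable_sum_smul_dampedRlInt hr hδ hu).norm hpointwise
      _ ≤ _ := integral_norm_sum_smul_dampedRlInt_le hr hδ hu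
  have hzero : ∫ t, ‖u t‖ = 0 := by
    have hnonneg : 0 ≤ ∫ t, ‖u t‖ := integral_nonneg fun t => norm_nonneg (u t)
    nlinarith
  filter_upwards [(integral_eq_zero_iff_of_nonneg (fun t => norm_nonneg (u t)) hu.norm).1 hzero]
    with t ht using norm_eq_zero.1 ht

lemma ae_eq_zero_of_dampedRlInt_equation [CompleteSpace E] [SMulCommClass ℝ 𝕜 E] (hr : 0 < r)
    {m : ℝ} (hm : 0 ≤ m) {α : ι → ℝ} (hα : ∀ i ∈ s, m ≤ α i)
    (hsmall : ∑ i ∈ s, ‖c i‖ * r ^ (-(α i - m)) < ‖c₀‖)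
    (hu : Integrable u) (hsupp : Function.support u ⊆ Iio b)
    (h : c₀ • dampedRlInt r m u + ∑ i ∈ s, c i • dampedRlInt r (α i) u
      =ᵐ[volume.restrict (Iio b)] 0) :
    u =ᵐ[volume] 0 := by
  have hδ : ∀ i ∈ s, 0 ≤ α i - m := fun i hi => sub_nonneg.2 (hα i hi)
  have hterm : ∀ i ∈ s, Integrable (c i • dampedRlInt r (α i - m) u) :=
    fun i hi => (integrable_dampedRlInt hr (hδ i hi) hu).smul (c i)
  have hsemigroup : ∀ᵐ t, ∀ i ∈ s,
      dampedRlInt r m (dampedRlInt r (α i - m) u) t = dampedRlInt r (α i) u t := by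
    rw [eventually_all_finset]
    intro i hi
    simpa [EventuallyEq] using dampedRlInt_dampedRlInt hr hm (hδ i hi) hu
  have hfactor : dampedRlInt r m (c₀ • u + ∑ i ∈ s, c i • dampedRlInt r (α i - m) u) =ᵐ[volume]
      c₀ • dampedRlInt r m u + ∑ i ∈ s, c i • dampedRlInt r (α i) u := by
    filter_upwards [dampedRlInt_add hr hm (hu.smul c₀) (integrable_finsetSum' s hterm),
      dampedRlInt_sum hr hm hterm, hsemigroup] with t hadd hsum hcomp
    rw [hadd, Pi.add_apply, hsum]
    simp only [dampedRlInt_const_smul, Pi.add_apply, Finset.sum_apply, Pi.smul_apply]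
    rw [Finset.sum_congr rfl fun i hi => by rw [hcomp i hi]]
  exact ae_eq_zero_of_smul_add_sum_smul_dampedRlInt hr hδ hsmall hu hsupp
    (ae_eq_zero_of_dampedRlInt hr hm ((hu.smul c₀).add (integrable_finsetSum' s hterm))
      (hfactor.restrict.trans h))

end DampedEquation

lemma exists_pos_sum_mul_rpow_neg_lt {ι : Type*} {s : Finset ι} (w : ι → ℝ) {δ : ι → ℝ}
    (hδ : ∀ i ∈ s, 0 < δ i) {ε : ℝ} (hε : 0 < ε) : ∃ r > 0, ∑ i ∈ s, w i * r ^ (-δ i) < ε := by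
  have hlim : Tendsto (fun r : ℝ => ∑ i ∈ s, w i * r ^ (-δ i)) atTop (𝓝 (∑ i ∈ s, w i * 0)) :=
    tendsto_finsetSum s fun i hi => (tendsto_rpow_neg_atTop (hδ i hi)).const_mul (w i)
  simp only [mul_zero, Finset.sum_const_zero] at hlim
  exact ((eventually_gt_atTop 0).and (hlim.eventually_lt_const hε)).exists

/-! ### Damping the Riemann–Liouville integral -/

/-- Extension by zero of `e^(-rs) x(s)` from `(a,b)` to the line, the function to which the damped
fractional integrals are applied. -/
noncomputable def dampedExt {E : Type*} [NormedAddCommGroup E] [NormedSpace ℝ E]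
    (r a b : ℝ) (x : ℝ → E) : ℝ → E :=
  (Ioo a b).indicator fun s => Real.exp (-(r * s)) • x s

section DampedExt

variable {E : Type*} [NormedAddCommGroup E] [NormedSpace ℝ E] {r a b : ℝ}

lemma support_dampedExt_subset (x : ℝ → E) :
    Function.support (dampedExt r a b x) ⊆ Ioo a b :=
  Set.support_indicator_subset

lemma integrable_dampedExt (r : ℝ) {x : ℝ → E}
    (hx : IntegrableOn x (Ioo a b)) : Integrable (dampedExt r a b x) := by
  rw [dampedExt, integrable_indicator_iff measurableSet_Ioo]
  exact hx.continuousOn_smul_of_subset (K := Icc a b) (by fun_prop) isCompact_Icc measurableSet_Ioo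
    Ioo_subset_Icc_self

lemma dampedRlInt_dampedExt (β : ℝ) (x : ℝ → ℂ) {t : ℝ} (ht : t ∈ Ioo a b) :
    dampedRlInt r β (dampedExt r a b x) t = Real.exp (-(r * t)) • rlInt a β x t := by
  rcases eq_or_ne β 0 with rfl | hβ
  · simp [rlInt, dampedExt, indicator_of_mem ht]
  have hexp : ∀ s, Real.exp (r * s) • dampedExt r a b x s = (Ioo a b).indicator x s := fun s => by
    by_cases hs : s ∈ Ioo a b <;>
      simp [dampedExt, hs, smul_smul, ← Real.exp_add, -Complex.real_smul]
  have hinter : Iio t ∩ Ioo a b = Ioo a t := by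
    ext s
    exact ⟨fun hs => ⟨hs.2.1, hs.1⟩, fun hs => ⟨hs.2, hs.1, hs.2.trans ht.2⟩⟩
  rw [dampedRlInt_of_ne_zero hβ, rlKernel_convolution_apply, rlInt, if_neg hβ,
    intervalIntegral.integral_of_le ht.1.le, integral_Ioc_eq_integral_Ioo, ← hinter,
    ← setIntegral_indicator measurableSet_Ioo]
  simp only [hexp, indicator_smul_apply]

lemma dampedExt_sub (x₁ x₂ : ℝ → E) :
    dampedExt r a b (x₁ - x₂) = dampedExt r a b x₁ - dampedExt r a b x₂ := by
  simp only [dampedExt, Pi.sub_apply, smul_sub]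
  exact indicator_sub _ _ _

lemma rlInt_sub {β : ℝ} (hβ : 0 ≤ β) {x₁ x₂ : ℝ → ℂ} (hx₁ : IntegrableOn x₁ (Ioo a b))
    (hx₂ : IntegrableOn x₂ (Ioo a b)) :
    rlInt a β (x₁ - x₂) =ᵐ[volume.restrict (Ioo a b)] rlInt a β x₁ - rlInt a β x₂ := by
  have hsub := dampedRlInt_sub one_pos hβ (integrable_dampedExt 1 hx₁) (integrable_dampedExt 1 hx₂)
  filter_upwards [ae_restrict_of_ae hsub, ae_restrict_mem measurableSet_Ioo] with t ht hmem
  rw [← dampedExt_sub, Pi.sub_apply] at ht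
  simp only [dampedRlInt_dampedExt _ _ hmem, ← smul_sub] at ht
  exact smul_right_injective ℂ (Real.exp_ne_zero _) ht

end DampedExt

/-! ### Uniqueness -/

lemma ae_restrict_Iio_of_Iio_of_Ioo {a b : ℝ} {p : ℝ → Prop}
    (ha : ∀ᵐ t ∂volume.restrict (Iio a), p t) (hab : ∀ᵐ t ∂volume.restrict (Ioo a b), p t) :
    ∀ᵐ t ∂volume.restrict (Iio b), p t := by
  have hcover : Iio b ⊆ Iic a ∪ Ioo a b := fun t ht =>
    (le_or_gt t a).imp id fun hat => ⟨hat, ht⟩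
  rw [restrict_Iio_eq_restrict_Iic] at ha
  exact ae_restrict_of_ae_restrict_of_subset hcover ((ae_restrict_union_iff _ _ _).2 ⟨ha, hab⟩)

lemma ae_eq_zero_of_rlInt_equation {ι : Type*} {s : Finset ι} {a b m : ℝ} {α : ι → ℝ} {c₀ : ℂ}
    {c : ι → ℂ} (hc₀ : c₀ ≠ 0) (hm : 0 ≤ m) (hα : ∀ i ∈ s, m < α i) {x : ℝ → ℂ}
    (hx : IntegrableOn x (Ioo a b))
    (h : ∀ᵐ t ∂volume.restrict (Ioo a b),
      c₀ * rlInt a m x t + ∑ i ∈ s, c i * rlInt a (α i) x t = 0) :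
    x =ᵐ[volume.restrict (Ioo a b)] 0 := by
  obtain ⟨r, hr, hsmall⟩ := exists_pos_sum_mul_rpow_neg_lt (fun i => ‖c i‖)
    (fun i hi => sub_pos.2 (hα i hi)) (norm_pos_iff.2 hc₀)
  set u := dampedExt r a b x
  have hsupp : Function.support u ⊆ Ioo a b := support_dampedExt_subset x
  have hpast : ∀ β, dampedRlInt r β u =ᵐ[volume.restrict (Iio a)] 0 := fun β => by
    refine dampedRlInt_ae_eq_zero ?_
    filter_upwards [ae_restrict_mem measurableSet_Iio] with t ht
    exact Function.notMem_support.1 fun htu => lt_asymm ht (hsupp htu).1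
  have hdamped : c₀ • dampedRlInt r m u + ∑ i ∈ s, c i • dampedRlInt r (α i) u
      =ᵐ[volume.restrict (Iio b)] 0 := by
    refine ae_restrict_Iio_of_Iio_of_Ioo (a := a) ?_ ?_
    · filter_upwards [hpast m, (eventually_all_finset s).2 fun i _ => hpast (α i)] with t htm hts
      simp +contextual [htm, hts]
    · filter_upwards [h, ae_restrict_mem measurableSet_Ioo] with t ht hmem
      simp only [Pi.add_apply, Finset.sum_apply, Pi.smul_apply, u, dampedRlInt_dampedExt _ _ hmem,
        smul_comm _ (Real.exp _), ← Finset.smul_sum, ← smul_add]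
      simp only [smul_eq_mul, ht, smul_zero, Pi.zero_apply]
  have hu : u =ᵐ[volume] 0 := ae_eq_zero_of_dampedRlInt_equation hr hm
    (fun i hi => (hα i hi).le) hsmall (integrable_dampedExt r hx) (hsupp.trans fun _ ht => ht.2)
    hdamped
  filter_upwards [ae_restrict_of_ae hu, ae_restrict_mem measurableSet_Ioo] with t ht hmem
  simp only [u, dampedExt, indicator_of_mem hmem] at ht
  exact (smul_eq_zero.1 ht).resolve_left (Real.exp_ne_zero _)

theorem fractional_integral_equation_uniqueness_general {ι : Type*} [Fintype ι] {a b : ℝ}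
    {α : ι → ℝ} (hα0 : ∀ i, 0 ≤ α i) (hαinj : Function.Injective α)
    {c : ι → ℂ} (hc : ∃ i, c i ≠ 0) {x₁ x₂ : ℝ → ℂ}
    (hx₁ : IntegrableOn x₁ (Ioo a b)) (hx₂ : IntegrableOn x₂ (Ioo a b))
    (heq : ∀ᵐ t ∂volume.restrict (Ioo a b),
      ∑ i, c i * rlInt a (α i) x₁ t = ∑ i, c i * rlInt a (α i) x₂ t) :
    ∀ᵐ t ∂volume.restrict (Ioo a b), x₁ t = x₂ t := by
  classical
  let s : Finset ι := {i | c i ≠ 0}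
  obtain ⟨i₀, hi₀, hmin⟩ : ∃ i₀ ∈ s, ∀ i ∈ s, α i₀ ≤ α i :=
    s.exists_min_image α (hc.imp fun i hi => by simpa [s] using hi)
  have hlt : ∀ i ∈ s.erase i₀, α i₀ < α i := fun i hi =>
    (hmin i (Finset.mem_of_mem_erase hi)).lt_of_ne (hαinj.ne (Finset.ne_of_mem_erase hi).symm)
  have hsum : ∀ z : ι → ℂ, c i₀ * z i₀ + ∑ i ∈ s.erase i₀, c i * z i = ∑ i, c i * z i := fun z => by
    rw [Finset.add_sum_erase s (fun i => c i * z i) hi₀]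
    exact Finset.sum_subset s.subset_univ fun i _ hi => by simp_all [s]
  have hsub : ∀ᵐ t ∂volume.restrict (Ioo a b), ∀ i,
      rlInt a (α i) (x₁ - x₂) t = rlInt a (α i) x₁ t - rlInt a (α i) x₂ t :=
    ae_all_iff.2 fun i => rlInt_sub (hα0 i) hx₁ hx₂
  have hzero : x₁ - x₂ =ᵐ[volume.restrict (Ioo a b)] 0 := by
    refine ae_eq_zero_of_rlInt_equation (c := c) (by simpa [s] using hi₀) (hα0 i₀) hlt
      (hx₁.sub hx₂) ?_
    filter_upwards [heq, hsub] with t ht hsubt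
    rw [hsum fun i => rlInt a (α i) (x₁ - x₂) t]
    simp only [hsubt, mul_sub, Finset.sum_sub_distrib, ht, sub_self]
  exact hzero.mono fun t ht => sub_eq_zero.1 ht

/-- A linear fractional-order integral equation with constant coefficients and
pairwise distinct nonnegative rational orders, whose coefficients are not all zero, has at
most one solution in `L¹(a,b)`: if two integrable functions have a.e. equal images under
`Σ_i c_i · I_{a+}^{α_i}`, they agree a.e. on `(a,b)`. -/
theorem fractional_integral_equation_uniqueness
    (a b : ℝ) (hab : a < b) (l : ℕ) (hl : 1 ≤ l)
    (α : Fin l → ℚ) (hα0 : ∀ i, 0 ≤ α i) (hαinj : Function.Injective α)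
    (c : Fin l → ℂ) (hc : ∃ i, c i ≠ 0)
    (x₁ x₂ : ℝ → ℂ)
    (hx₁ : IntegrableOn x₁ (Set.Ioo a b)) (hx₂ : IntegrableOn x₂ (Set.Ioo a b))
    (heq : ∀ᵐ t ∂(volume.restrict (Set.Ioo a b)),
      ∑ i, c i * rlInt a (α i : ℝ) x₁ t = ∑ i, c i * rlInt a (α i : ℝ) x₂ t) :
    ∀ᵐ t ∂(volume.restrict (Set.Ioo a b)), x₁ t = x₂ t :=
  fractional_integral_equation_uniqueness_general (fun i => Rat.cast_nonneg.2 (hα0 i))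
    (Rat.cast_injective.comp hαinj) hc hx₁ hx₂ heq
end

section
/- Let a < b be real numbers and let 0 ≤ β < α be real orders. If f : ℝ → ℂ is such that there exists g integrable on (a,b) with f(t) = (I_{a+}^α g)(t) for almost every t ∈ (a,b), then there exists h integrable on (a,b) with f(t) = (I_{a+}^β h)(t) for almost every t ∈ (a,b). That is, I_{a+}^α(L¹(a,b)) ⊆ I_{a+}^β(L¹(a,b)). -/
/-!
Conjugation by `exp (-t)` turns the fractional integral of order `α` into convolution with the
density `u ^ (α - 1) * exp (-u) / Γ(α)` of the Gamma distribution, which is integrable on all of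
`ℝ`. By the Beta integral these densities are additive in `α` under convolution, so
`I^(α+β) = I^β ∘ I^α` is associativity of convolution. Hence `I^α g = I^β (I^(α-β) g)`.
-/

open MeasureTheory

open Set Convolution ProbabilityTheory
open ContinuousLinearMap (lsmul mul)

section Convolution

variable {𝕜 G E E' E'' F F' F'' : Type*} [RCLike 𝕜]
  [NormedAddCommGroup E] [NormedSpace 𝕜 E] [NormedAddCommGroup E'] [NormedSpace 𝕜 E']
  [NormedAddCommGroup E''] [NormedSpace 𝕜 E'']
  [NormedAddCommGroup F] [NormedSpace ℝ F] [NormedSpace 𝕜 F] [CompleteSpace F]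
  [NormedAddCommGroup F'] [NormedSpace ℝ F'] [NormedSpace 𝕜 F'] [CompleteSpace F']
  [NormedAddCommGroup F''] [NormedSpace ℝ F''] [NormedSpace 𝕜 F''] [CompleteSpace F'']
  [AddGroup G] [MeasurableSpace G] [MeasurableAdd₂ G] [MeasurableNeg G]
  {μ : Measure G} [SFinite μ] [μ.IsAddRightInvariant]

lemma ae_convolution_assoc_s14 (L : E →L[𝕜] E' →L[𝕜] F) (L₂ : F →L[𝕜] E'' →L[𝕜] F')
    (L₃ : E →L[𝕜] F'' →L[𝕜] F') (L₄ : E' →L[𝕜] E'' →L[𝕜] F'')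
    (hL : ∀ x y z, L₂ (L x y) z = L₃ x (L₄ y z)) {f : G → E} {g : G → E'} {k : G → E''}
    (hf : Integrable f μ) (hg : Integrable g μ) (hk : Integrable k μ) :
    (f ⋆[L, μ] g) ⋆[L₂, μ] k =ᵐ[μ] f ⋆[L₃, μ] (g ⋆[L₄, μ] k) := by
  have hgk : Integrable ((‖g ·‖) ⋆[mul ℝ ℝ, μ] (‖k ·‖)) μ :=
    hg.norm.integrable_convolution _ hk.norm
  filter_upwards [hf.norm.ae_convolution_exists (mul ℝ ℝ) hgk] with x hx
  exact convolution_assoc L L₂ L₃ L₄ hL hf.aestronglyMeasurable hg.aestronglyMeasurable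
    hk.aestronglyMeasurable (hf.ae_convolution_exists L hg)
    (hg.norm.ae_convolution_exists (mul ℝ ℝ) hk.norm) hx

end Convolution

section Gamma

variable {p q r u : ℝ}

lemma integral_rpow_mul_sub_rpow_s14 (hp : 0 < p) (hq : 0 < q) (hu : 0 < u) :
    ∫ s in 0..u, s ^ (p - 1) * (u - s) ^ (q - 1) = beta p q * u ^ (p + q - 1) := by
  have hcast : ∫ s in 0..u, (s : ℂ) ^ ((p : ℂ) - 1) * ((u : ℂ) - s) ^ ((q : ℂ) - 1) =
      ∫ s in 0..u, ((s ^ (p - 1) * (u - s) ^ (q - 1) : ℝ) : ℂ) := by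
    refine intervalIntegral.integral_congr fun s hs => ?_
    rw [uIcc_of_le hu.le] at hs
    push_cast [Complex.ofReal_cpow hs.1, Complex.ofReal_cpow (sub_nonneg.2 hs.2)]
    rfl
  rw [← Complex.ofReal_inj, ← intervalIntegral.integral_ofReal, ← hcast,
    Complex.betaIntegral_scaled _ _ hu,
    Complex.betaIntegral_eq_Gamma_mul_div _ _ (by simpa) (by simpa), beta]
  push_cast [Complex.ofReal_cpow hu.le, ← Complex.Gamma_ofReal]
  ring

lemma gammaPDFReal_of_nonneg (hu : 0 ≤ u) :
    gammaPDFReal p r u = r ^ p / Real.Gamma p * u ^ (p - 1) * Real.exp (-(r * u)) :=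
  if_pos hu

lemma gammaPDFReal_of_neg (hu : u < 0) : gammaPDFReal p r u = 0 :=
  if_neg hu.not_ge

lemma integrable_gammaPDFReal (hp : 0 < p) (hr : 0 < r) : Integrable (gammaPDFReal p r) := by
  rw [← lintegral_ofReal_ne_top_iff_integrable
    (stronglyMeasurable_gammaPDFReal p r).aestronglyMeasurable
    (.of_forall (gammaPDFReal_nonneg hp hr))]
  exact (lintegral_gammaPDF_eq_one hp hr).trans_ne ENNReal.one_ne_top

lemma indicator_Ioi_gammaPDFReal_ae_eq (p r : ℝ) :
    (Ioi 0).indicator (gammaPDFReal p r) =ᵐ[volume] gammaPDFReal p r := by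
  filter_upwards [Measure.ae_ne volume 0] with u hu
  rcases hu.lt_or_gt with hu | hu
  · rw [indicator_of_notMem (notMem_Ioi.2 hu.le), gammaPDFReal_of_neg hu]
  · exact indicator_of_mem hu _

lemma integral_gammaPDFReal_mul_gammaPDFReal_sub (hp : 0 < p) (hq : 0 < q) (hr : 0 < r)
    (hu : 0 < u) :
    ∫ s in 0..u, gammaPDFReal p r s * gammaPDFReal q r (u - s) = gammaPDFReal (p + q) r u := by
  have hΓp : Real.Gamma p ≠ 0 := (Real.Gamma_pos_of_pos hp).ne'
  have hΓq : Real.Gamma q ≠ 0 := (Real.Gamma_pos_of_pos hq).ne'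
  calc
    _ = ∫ s in 0..u, r ^ (p + q) / (Real.Gamma p * Real.Gamma q) * Real.exp (-(r * u)) *
          (s ^ (p - 1) * (u - s) ^ (q - 1)) := by
      refine intervalIntegral.integral_congr fun s hs => ?_
      rw [uIcc_of_le hu.le] at hs
      have hexp : Real.exp (-(r * u)) = Real.exp (-(r * s)) * Real.exp (-(r * (u - s))) := by
        rw [← Real.exp_add]
        ring_nf
      simp only [gammaPDFReal_of_nonneg hs.1, gammaPDFReal_of_nonneg (sub_nonneg.2 hs.2),
        Real.rpow_add hr, hexp]
      ring
    _ = gammaPDFReal (p + q) r u := by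
      rw [intervalIntegral.integral_const_mul, integral_rpow_mul_sub_rpow_s14 hp hq hu, beta,
        gammaPDFReal_of_nonneg hu.le]
      field_simp

/-- Equality can fail at `0`: the convolution vanishes there, but `gammaPDFReal 1 r 0 = r`. -/
lemma gammaPDFReal_convolution_ae_eq (hp : 0 < p) (hq : 0 < q) (hr : 0 < r) :
    gammaPDFReal p r ⋆[mul ℝ ℝ] gammaPDFReal q r =ᵐ[volume] gammaPDFReal (p + q) r := by
  rw [← convolution_congr _ (indicator_Ioi_gammaPDFReal_ae_eq p r)
    (indicator_Ioi_gammaPDFReal_ae_eq q r), ← posConvolution_eq_convolution_indicator _ _ _ volume]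
  refine .trans (.of_eq ?_) (indicator_Ioi_gammaPDFReal_ae_eq (p + q) r)
  exact indicator_congr fun u hu => integral_gammaPDFReal_mul_gammaPDFReal_sub hp hq hr hu

end Gamma

section ExpDamp

variable {E : Type*} [NormedAddCommGroup E] [NormedSpace ℝ E] {a b : ℝ} {x y : ℝ → E}

/-- The function `x`, multiplied by `exp (-t)` and cut off to `(a, ∞)`. In terms of `expDamp a x`,
fractional integration from `a` is a convolution on `ℝ` with an integrable kernel. -/
noncomputable def expDamp (a : ℝ) (x : ℝ → E) : ℝ → E :=
  (Ioi a).indicator fun t => Real.exp (-t) • x t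

lemma expDamp_of_le {t : ℝ} (ht : t ≤ a) : expDamp a x t = 0 :=
  indicator_of_notMem (notMem_Ioi.2 ht) _

lemma expDamp_of_lt {t : ℝ} (ht : a < t) : expDamp a x t = Real.exp (-t) • x t :=
  indicator_of_mem (mem_Ioi.2 ht) _

lemma exp_smul_expDamp {t : ℝ} (ht : a < t) : Real.exp t • expDamp a x t = x t := by
  rw [expDamp_of_lt ht, smul_smul, ← Real.exp_add, add_neg_cancel, Real.exp_zero, one_smul]

lemma integrable_expDamp (hx : IntegrableOn x (Ioi a)) : Integrable (expDamp a x) := by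
  refine IntegrableOn.integrable_indicator ?_ measurableSet_Ioi
  refine hx.bdd_smul (Real.exp (-a)) (by fun_prop) ?_
  filter_upwards [ae_restrict_mem measurableSet_Ioi] with t ht
  rw [Real.norm_eq_abs, Real.abs_exp]
  exact Real.exp_le_exp.2 (neg_le_neg (le_of_lt ht))

lemma integrableOn_Ioo_of_integrable_expDamp (hx : Integrable (expDamp a x)) :
    IntegrableOn x (Ioo a b) :=
  (hx.integrableOn.continuousOn_smul_of_subset Real.continuous_exp.continuousOn isCompact_Icc
    measurableSet_Ioo Ioo_subset_Icc_self).congr_fun (fun _ ht => exp_smul_expDamp ht.1)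
    measurableSet_Ioo

lemma ae_eq_of_expDamp_ae_eq (h : expDamp a x =ᵐ[volume] expDamp a y) :
    x =ᵐ[volume.restrict (Ioi a)] y := by
  filter_upwards [ae_restrict_of_ae h, ae_restrict_mem measurableSet_Ioi] with t h ht
  rw [← exp_smul_expDamp (x := x) ht, h, exp_smul_expDamp ht]

lemma gammaPDFReal_sub_smul_expDamp (a α : ℝ) (x : ℝ → E) (t s : ℝ) :
    gammaPDFReal α 1 (t - s) • expDamp a x s =
      (Ioc a t).indicator (fun s => (Real.exp (-t) * (Real.Gamma α)⁻¹) •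
        ((t - s) ^ (α - 1) : ℝ) • x s) s := by
  rcases le_or_gt s a with hsa | has
  · rw [expDamp_of_le hsa, smul_zero, indicator_of_notMem fun hs => hs.1.not_ge hsa]
  rcases lt_or_ge t s with hts | hst
  · rw [gammaPDFReal_of_neg (sub_neg.2 hts), zero_smul,
      indicator_of_notMem fun hs => hs.2.not_gt hts]
  have hexp : Real.exp (-t) = Real.exp (-(t - s)) * Real.exp (-s) := by
    rw [← Real.exp_add]
    ring_nf
  rw [indicator_of_mem (mem_Ioc.2 ⟨has, hst⟩), expDamp_of_lt has,
    gammaPDFReal_of_nonneg (sub_nonneg.2 hst), smul_smul, smul_smul, hexp, Real.one_rpow, one_mul]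
  congr 1
  ring

end ExpDamp

section RiemannLiouville

variable {a b α β : ℝ} {x y : ℝ → ℂ}

lemma rlInt_zero (a : ℝ) (x : ℝ → ℂ) : rlInt a 0 x = x :=
  if_pos rfl

lemma rlInt_of_ne_zero (hα : α ≠ 0) (t : ℝ) :
    rlInt a α x t = (Real.Gamma α)⁻¹ • ∫ s in a..t, ((t - s) ^ (α - 1) : ℝ) • x s := by
  rw [rlInt, if_neg hα]

lemma rlInt_congr (h : EqOn x y (Ioo a b)) : EqOn (rlInt a α x) (rlInt a α y) (Ioo a b) := by
  intro t ht
  rcases eq_or_ne α 0 with rfl | hα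
  · simpa only [rlInt_zero] using h ht
  · rw [rlInt_of_ne_zero hα, rlInt_of_ne_zero hα]
    congr 1
    refine intervalIntegral.integral_congr_ae (.of_forall fun s hs => ?_)
    rw [uIoc_of_le ht.1.le] at hs
    rw [h ⟨hs.1, hs.2.trans_lt ht.2⟩]

lemma expDamp_rlInt (hα : α ≠ 0) :
    expDamp a (rlInt a α x) = gammaPDFReal α 1 ⋆[lsmul ℝ ℝ] expDamp a x := by
  ext t
  rw [convolution_lsmul_swap]
  simp only [gammaPDFReal_sub_smul_expDamp]
  rw [integral_indicator measurableSet_Ioc, integral_smul]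
  rcases le_or_gt t a with hta | hat
  · rw [expDamp_of_le hta, Ioc_eq_empty hta.not_gt, setIntegral_empty, smul_zero]
  · rw [expDamp_of_lt hat, rlInt_of_ne_zero hα, intervalIntegral.integral_of_le hat.le,
      smul_smul]

lemma integrable_expDamp_rlInt (hα : 0 ≤ α) (hx : Integrable (expDamp a x)) :
    Integrable (expDamp a (rlInt a α x)) := by
  rcases hα.eq_or_lt with rfl | hα
  · rwa [rlInt_zero]
  · rw [expDamp_rlInt hα.ne']
    exact (integrable_gammaPDFReal hα one_pos).integrable_convolution _ hx

lemma rlInt_rlInt_ae_eq (hα : 0 ≤ α) (hβ : 0 ≤ β) (hx : Integrable (expDamp a x)) :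
    rlInt a α (rlInt a β x) =ᵐ[volume.restrict (Ioi a)] rlInt a (α + β) x := by
  rcases hα.eq_or_lt with rfl | hα
  · rw [rlInt_zero, zero_add]
  rcases hβ.eq_or_lt with rfl | hβ
  · rw [rlInt_zero, add_zero]
  refine ae_eq_of_expDamp_ae_eq ?_
  calc expDamp a (rlInt a α (rlInt a β x))
    _ = gammaPDFReal α 1 ⋆[lsmul ℝ ℝ] (gammaPDFReal β 1 ⋆[lsmul ℝ ℝ] expDamp a x) := by
      rw [expDamp_rlInt hα.ne', expDamp_rlInt hβ.ne']
    _ =ᵐ[volume] (gammaPDFReal α 1 ⋆[mul ℝ ℝ] gammaPDFReal β 1) ⋆[lsmul ℝ ℝ] expDamp a x :=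
      (ae_convolution_assoc_s14 (mul ℝ ℝ) (lsmul ℝ ℝ) (lsmul ℝ ℝ) (lsmul ℝ ℝ)
        mul_smul (integrable_gammaPDFReal hα one_pos)
        (integrable_gammaPDFReal hβ one_pos) hx).symm
    _ = gammaPDFReal (α + β) 1 ⋆[lsmul ℝ ℝ] expDamp a x :=
      convolution_congr _ (gammaPDFReal_convolution_ae_eq hα hβ one_pos) .rfl
    _ = expDamp a (rlInt a (α + β) x) := (expDamp_rlInt (add_pos hα hβ).ne').symm

end RiemannLiouville

/-- For real orders `0 ≤ β < α`, we have the inclusion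
`I_{a+}^α(L¹(a,b)) ⊆ I_{a+}^β(L¹(a,b))`: if `f` agrees a.e. on `(a,b)` with the fractional
integral of order `α` of some integrable function, it also agrees a.e. on `(a,b)` with the
fractional integral of order `β` of some integrable function. -/
theorem rlInt_image_mono
    (a b : ℝ) (hab : a < b) (α β : ℝ) (hβ : 0 ≤ β) (hβα : β < α)
    (f : ℝ → ℂ)
    (hf : ∃ g : ℝ → ℂ, IntegrableOn g (Set.Ioo a b) ∧
      ∀ᵐ t ∂(volume.restrict (Set.Ioo a b)), f t = rlInt a α g t) :
    ∃ h : ℝ → ℂ, IntegrableOn h (Set.Ioo a b) ∧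
      ∀ᵐ t ∂(volume.restrict (Set.Ioo a b)), f t = rlInt a β h t := by
  obtain ⟨g, hg, hfg⟩ := hf
  let G : ℝ → ℂ := (Ioo a b).indicator g
  have hG : Integrable (expDamp a G) :=
    integrable_expDamp (hg.integrable_indicator measurableSet_Ioo).integrableOn
  have hγ : 0 ≤ α - β := sub_nonneg.2 hβα.le
  refine ⟨rlInt a (α - β) G,
    integrableOn_Ioo_of_integrable_expDamp (integrable_expDamp_rlInt hγ hG), ?_⟩
  have hsemigroup : rlInt a β (rlInt a (α - β) G) =ᵐ[volume.restrict (Ioo a b)]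
      rlInt a (β + (α - β)) G :=
    ae_restrict_of_ae_restrict_of_subset Ioo_subset_Ioi_self (rlInt_rlInt_ae_eq hβ hγ hG)
  filter_upwards [hfg, hsemigroup, ae_restrict_mem measurableSet_Ioo] with t hft hGt ht
  calc f t
    _ = rlInt a α g t := hft
    _ = rlInt a α G t := rlInt_congr (fun s hs => (indicator_of_mem hs g).symm) ht
    _ = rlInt a β (rlInt a (α - β) G) t := by rw [hGt, add_sub_cancel]
end
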